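/- arXiv:1710.10322 — 2 statements merged into one kernel-verified Lean document; each statement's English description precedes it below -/
import Mathlib

section
/- There exists an absolute constant C > 0 such that for all positive integers r ≤ n, there exists a prime power q with q ≤ C·n and a positive divisor d of q−1 satisfying d ≥ r and (q−1)/d ≥ n/r. (Equivalently, the cyclic group 𝔽_q^* contains a subgroup of size at least r having at least n/r cosets.) -/
/-!
Dirichlet approximation gives `k = 2 ^ m * t`, with `t ≤ m`, for which `x = n ^ (1 / k)` satisfies
`r = x ^ j * s` or `r = x ^ (j + 1) / s` with `s` at most a small power of `x`. If a prime `p` of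
size about `x` is such that `p - 1` has a divisor `d` of size about `s`, then `q = p ^ k` works:
the cyclotomic factors of `(p ^ k - 1) / (p - 1)` can be multiplied to a divisor of size about
`p ^ i` for each `i < k`, and `d`, or `(p - 1) / d`, corrects such a divisor to size about `r`.

The pair `d`, `p` is found with `d` prime, one candidate modulus per dyadic range. Summing
`log n = ∑ a * b = n, Λ a` over the integers `n ∈ (x, 4x]` without small prime factors, the terms
with `b = 1` are carried by prime powers and those with `b > 1` form a bilinear sum. The sieve gives
the class of `1` modulo each `d` its expected share of the left side, and the dual large sieve gives
it its expected share of the bilinear sum for at least one of boundedly many moduli. For that `d`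
the class must also contain its share of the prime powers, and proper powers are negligible.
-/

open Finset ArithmeticFunction

section Density

/-- `HasDensity S f δ E`: in every residue class to a modulus prime to all elements of `S`, the
function `f` has mean value `δ` on each interval, up to a total error `E` that is uniform in the
interval, the class and the modulus. -/
def HasDensity (S : Finset ℕ) (f : ℕ → ℝ) (δ E : ℝ) : Prop :=
  ∀ d : ℕ, 0 < d → (∀ p ∈ S, d.Coprime p) → ∀ a b c : ℕ, a ≤ b →
    |∑ n ∈ Ioc a b with n ≡ c [MOD d], f n - (b - a) / d * δ| ≤ E

variable {S T : Finset ℕ} {f g : ℕ → ℝ} {δ ε E F : ℝ}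

lemma hasDensity_one : HasDensity ∅ 1 1 1 := by
  intro d hd _ a b c hab
  have : (0 : ℚ) < d := mod_cast hd
  have hcount := Nat.Ioc_filter_modEq_card a b hd c
  have hfloor : ⌊((a : ℚ) - c) / d⌋ ≤ ⌊((b : ℚ) - c) / d⌋ := by gcongr
  rw [max_eq_left (by linarith)] at hcount
  have hcount' : (#{n ∈ Ioc a b | n ≡ c [MOD d]} : ℚ) =
      ⌊((b : ℚ) - c) / d⌋ - ⌊((a : ℚ) - c) / d⌋ := by
    exact_mod_cast hcount
  have hdiff : ((b : ℚ) - c) / d - (a - c) / d = (b - a) / d * 1 := by ring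
  have key : |(#{n ∈ Ioc a b | n ≡ c [MOD d]} : ℚ) - (b - a) / d * 1| ≤ 1 := by
    rw [hcount', ← hdiff, abs_le]
    have := Int.floor_le (((a : ℚ) - c) / d)
    have := Int.lt_floor_add_one (((a : ℚ) - c) / d)
    have := Int.floor_le (((b : ℚ) - c) / d)
    have := Int.lt_floor_add_one (((b : ℚ) - c) / d)
    constructor <;> linarith
  simpa using Rat.cast_le (K := ℝ) |>.2 key

namespace HasDensity

lemma mono_set (hf : HasDensity S f δ E) (h : S ⊆ T) : HasDensity T f δ E :=
  fun d hd hT => hf d hd fun p hp => hT p (h hp)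

lemma mono_error (hf : HasDensity S f δ E) (h : E ≤ F) : HasDensity S f δ F :=
  fun d hd hS a b c hab => (hf d hd hS a b c hab).trans h

lemma add (hf : HasDensity S f δ E) (hg : HasDensity S g ε F) :
    HasDensity S (f + g) (δ + ε) (E + F) := by
  intro d hd hS a b c hab
  refine le_trans (le_of_eq ?_) ((abs_add_le _ _).trans
    (add_le_add (hf d hd hS a b c hab) (hg d hd hS a b c hab)))
  simp only [Pi.add_apply, sum_add_distrib]
  ring_nf

lemma const_mul (hf : HasDensity S f δ E) (t : ℝ) :
    HasDensity S (fun n => t * f n) (t * δ) (|t| * E) := by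
  intro d hd hS a b c hab
  rw [← mul_sum, mul_left_comm, ← mul_sub, abs_mul]
  exact mul_le_mul_of_nonneg_left (hf d hd hS a b c hab) (abs_nonneg t)

lemma sum {ι : Type*} {I : Finset ι} {f : ι → ℕ → ℝ} {δ E : ι → ℝ}
    (hf : ∀ i ∈ I, HasDensity S (f i) (δ i) (E i)) :
    HasDensity S (fun n => ∑ i ∈ I, f i n) (∑ i ∈ I, δ i) (∑ i ∈ I, E i) := by
  intro d hd hS a b c hab
  rw [sum_comm, mul_sum, ← sum_sub_distrib]
  exact (abs_sum_le_sum_abs _ _).trans (sum_le_sum fun i hi => hf i hi d hd hS a b c hab)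

lemma sub (hf : HasDensity S f δ E) (hg : HasDensity S g ε F) :
    HasDensity S (fun n => f n - g n) (δ - ε) (E + F) := by
  have h := hf.add (hg.const_mul (-1))
  simp only [abs_neg, abs_one, one_mul, neg_mul] at h
  exact h

lemma mul_dvd (hf : HasDensity S f δ E) {t : ℕ} (ht : 0 < t) (htS : ∀ p ∈ S, t.Coprime p)
    (htT : ∀ d : ℕ, (∀ p ∈ T, d.Coprime p) → d.Coprime t) :
    HasDensity (S ∪ T) (fun n => f n * if t ∣ n then 1 else 0) (δ / t) E := by
  intro d hd hdST a b c hab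
  have hdt : d.Coprime t := htT d fun p hp => hdST p (mem_union_right _ hp)
  obtain ⟨e, hed, het⟩ := Nat.chineseRemainder hdt c 0
  have hclass : ∀ n, n ≡ c [MOD d] ∧ t ∣ n ↔ n ≡ e [MOD d * t] := fun n => by
    rw [← Nat.modEq_and_modEq_iff_modEq_mul hdt, ← Nat.modEq_zero_iff_dvd]
    exact and_congr ⟨fun h => h.trans hed.symm, fun h => h.trans hed⟩
      ⟨fun h => h.trans het.symm, fun h => h.trans het⟩
  have h := hf (d * t) (by positivity)
    (fun p hp => (hdST p (mem_union_left _ hp)).mul_left (htS p hp)) a b e hab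
  simp only [mul_ite, mul_one, mul_zero]
  rw [← sum_filter, filter_filter]
  simp only [hclass]
  convert h using 3
  push_cast
  ring

lemma le_of_le (hf : HasDensity S f δ E) (hg : HasDensity S g ε F) (h : ∀ n, f n ≤ g n) :
    δ ≤ ε := by
  by_contra! hlt
  obtain ⟨N, hN⟩ := exists_nat_gt ((E + F) / (δ - ε))
  rw [div_lt_iff₀ (by linarith)] at hN
  have h1 := abs_le.1 (hf 1 one_pos (fun p _ => Nat.coprime_one_left p) 0 N 0 N.zero_le)
  have h2 := abs_le.1 (hg 1 one_pos (fun p _ => Nat.coprime_one_left p) 0 N 0 N.zero_le)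
  have h3 := sum_le_sum fun n (_ : n ∈ {n ∈ Ioc 0 N | n ≡ 0 [MOD 1]}) => h n
  simp only [Nat.cast_zero, Nat.cast_one, div_one, sub_zero] at h1 h2
  linarith [h1.1, h2.2]

end HasDensity

end Density

section BrunHooley

/-- The indicator function of the integers without prime factors in `S`. -/
def siftIndicator (S : Finset ℕ) (n : ℕ) : ℝ := ∏ p ∈ S, if p ∣ n then 0 else 1

/-- The density `∏ (1 - 1/p)` of the integers without prime factors in `S`. -/
noncomputable def siftDensity (S : Finset ℕ) : ℝ := ∏ p ∈ S, (1 - (p : ℝ)⁻¹)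

/-- The `j`-th elementary symmetric function of the reciprocals of the elements of `B`. -/
noncomputable def recipEsymm (B : Finset ℕ) (j : ℕ) : ℝ :=
  ∑ T ∈ B.powersetCard j, ∏ p ∈ T, (p : ℝ)⁻¹

/-- The Bonferroni sum for `siftIndicator B`, truncated after the terms with `k` primes. -/
def bonferroni (B : Finset ℕ) (k n : ℕ) : ℝ :=
  ∑ j ∈ range (k + 1), (-1) ^ j * (#{p ∈ B | p ∣ n}).choose j

variable {S B : Finset ℕ} {f : ℕ → ℝ} {δ E : ℝ} {j k n : ℕ}

lemma siftIndicator_eq_ite :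
    siftIndicator S n = if ∀ p ∈ S, ¬ p ∣ n then 1 else 0 := by
  split_ifs with h
  · exact prod_eq_one fun p hp => if_neg (h p hp)
  · push Not at h
    obtain ⟨p, hp, hpn⟩ := h
    exact prod_eq_zero hp (if_pos hpn)

lemma siftIndicator_nonneg : 0 ≤ siftIndicator S n := by
  rw [siftIndicator_eq_ite]
  split_ifs <;> norm_num

lemma siftIndicator_le_one : siftIndicator S n ≤ 1 := by
  rw [siftIndicator_eq_ite]
  split_ifs <;> norm_num

lemma siftIndicator_ne_zero_iff : siftIndicator S n ≠ 0 ↔ ∀ p ∈ S, ¬ p ∣ n := by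
  simp [siftIndicator_eq_ite]

lemma siftIndicator_union (h : Disjoint S B) :
    siftIndicator (S ∪ B) n = siftIndicator S n * siftIndicator B n :=
  prod_union h

lemma siftDensity_union (h : Disjoint S B) :
    siftDensity (S ∪ B) = siftDensity S * siftDensity B :=
  prod_union h

lemma siftDensity_pos (hS : ∀ p ∈ S, p.Prime) : 0 < siftDensity S :=
  prod_pos fun p hp => sub_pos.2 (inv_lt_one_of_one_lt₀ (mod_cast (hS p hp).one_lt))

lemma bonferroni_of_card_eq_zero (h : #{p ∈ B | p ∣ n} = 0) : bonferroni B k n = 1 := by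
  rw [bonferroni, h, sum_range_succ']
  simp

lemma bonferroni_of_even (hk : Even k) {i : ℕ} (h : #{p ∈ B | p ∣ n} = i + 1) :
    bonferroni B k n = i.choose k := by
  have := Int.alternating_sum_range_choose_eq_choose (n := i) (m := k)
  rw [hk.neg_one_pow, one_mul] at this
  rw [bonferroni, h]
  exact_mod_cast congrArg (Int.cast (R := ℝ)) this

lemma siftIndicator_eq_ite_card :
    siftIndicator B n = if #{p ∈ B | p ∣ n} = 0 then 1 else 0 := by
  simp only [siftIndicator_eq_ite, card_eq_zero, filter_eq_empty_iff]

lemma siftIndicator_le_bonferroni (hk : Even k) : siftIndicator B n ≤ bonferroni B k n := by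
  rw [siftIndicator_eq_ite_card]
  split_ifs with h
  · rw [bonferroni_of_card_eq_zero h]
  · obtain ⟨i, hi⟩ := Nat.exists_eq_succ_of_ne_zero h
    rw [bonferroni_of_even hk hi]
    positivity

lemma bonferroni_le_siftIndicator_add (hk : Even k) :
    bonferroni B k n ≤ siftIndicator B n + (#{p ∈ B | p ∣ n}).choose (k + 1) := by
  rw [siftIndicator_eq_ite_card]
  split_ifs with h
  · rw [bonferroni_of_card_eq_zero h]
    simp
  · obtain ⟨i, hi⟩ := Nat.exists_eq_succ_of_ne_zero h
    rw [bonferroni_of_even hk hi, hi, zero_add, Nat.cast_le, Nat.choose_succ_succ]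
    exact Nat.le_add_right _ _

lemma choose_card_dvd_eq_sum (hB : ∀ p ∈ B, p.Prime) :
    ((#{p ∈ B | p ∣ n}).choose j : ℝ) =
      ∑ T ∈ B.powersetCard j, if (∏ p ∈ T, p) ∣ n then 1 else 0 := by
  rw [sum_boole, ← card_powersetCard]
  congr 2
  ext T
  have hdvd : T ⊆ B → (T ⊆ {p ∈ B | p ∣ n} ↔ (∏ p ∈ T, p) ∣ n) := fun hTB =>
    ⟨fun h => prod_primes_dvd n (fun p hp => (hB p (hTB hp)).prime) fun p hp =>
      (mem_filter.1 (h hp)).2,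
    fun h p hp => mem_filter.2 ⟨hTB hp, (dvd_prod_of_mem _ hp).trans h⟩⟩
  simp only [mem_powersetCard, mem_filter]
  constructor
  · rintro ⟨hT, hj⟩
    have hTB := hT.trans (filter_subset _ _)
    exact ⟨⟨hTB, hj⟩, (hdvd hTB).1 hT⟩
  · rintro ⟨⟨hTB, hj⟩, h⟩
    exact ⟨(hdvd hTB).2 h, hj⟩

namespace HasDensity

lemma mul_choose (hf : HasDensity S f δ E) (hS : ∀ p ∈ S, p.Prime) (hB : ∀ p ∈ B, p.Prime)
    (hSB : Disjoint S B) (j : ℕ) :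
    HasDensity (S ∪ B) (fun n => f n * (#{p ∈ B | p ∣ n}).choose j) (δ * recipEsymm B j)
      ((#B).choose j * E) := by
  have h := HasDensity.sum (I := B.powersetCard j) fun T hT => by
    have hTB := (mem_powersetCard.1 hT).1
    refine hf.mul_dvd (T := B) (t := ∏ p ∈ T, p) (prod_pos fun p hp => (hB p (hTB hp)).pos)
      (fun p hp => Nat.Coprime.prod_left fun q hq => ?_)
      (fun d hd => Nat.Coprime.prod_right fun p hp => hd p (hTB hp))
    exact (Nat.coprime_primes (hB q (hTB hq)) (hS p hp)).2
      (disjoint_iff_ne.1 hSB p hp q (hTB hq)).symm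
  simp only [choose_card_dvd_eq_sum hB]
  convert h using 1
  · simp only [mul_sum]
  · simp only [recipEsymm, mul_sum, div_eq_mul_inv, Nat.cast_prod, prod_inv_distrib]
  · simp

lemma mul_bonferroni (hf : HasDensity S f δ E) (hS : ∀ p ∈ S, p.Prime) (hB : ∀ p ∈ B, p.Prime)
    (hSB : Disjoint S B) (k : ℕ) :
    HasDensity (S ∪ B) (fun n => f n * bonferroni B k n)
      (δ * ∑ j ∈ range (k + 1), (-1) ^ j * recipEsymm B j)
      (∑ j ∈ range (k + 1), (#B).choose j * E) := by
  have h := HasDensity.sum (I := range (k + 1)) fun j _ =>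
    (hf.mul_choose hS hB hSB j).const_mul ((-1) ^ j)
  simp only [bonferroni, mul_sum, mul_left_comm _ ((-1 : ℝ) ^ _)]
  simpa using h

end HasDensity

lemma hasDensity_siftIndicator (hB : ∀ p ∈ B, p.Prime) :
    ∃ E, HasDensity B (siftIndicator B) (siftDensity B) E := by
  induction B using Finset.induction_on with
  | empty => exact ⟨1, hasDensity_one⟩
  | insert p B hp ih =>
    obtain ⟨E, hE⟩ := ih fun q hq => hB q (mem_insert_of_mem hq)
    have hpp := hB p (mem_insert_self p B)
    have hcop : ∀ q ∈ B, p.Coprime q := fun q hq =>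
      (Nat.coprime_primes hpp (hB q (mem_insert_of_mem hq))).2 (ne_of_mem_of_not_mem hq hp).symm
    have h := hE.mul_dvd (T := {p}) hpp.pos hcop (by simp)
    refine ⟨E + E, ?_⟩
    convert (hE.mono_set subset_union_left).sub h using 1
    · rw [insert_eq, union_comm]
    · ext n
      rw [siftIndicator, prod_insert hp, ← siftIndicator]
      split_ifs <;> simp
    · rw [siftDensity, prod_insert hp, ← siftDensity]
      ring

variable {τ ε : ℝ}

lemma recipEsymm_nonneg (B : Finset ℕ) (j : ℕ) : 0 ≤ recipEsymm B j :=
  sum_nonneg fun _ _ => prod_nonneg fun _ _ => by positivity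

lemma siftDensity_le_sum_recipEsymm (hB : ∀ p ∈ B, p.Prime) (hk : Even k) :
    siftDensity B ≤ ∑ j ∈ range (k + 1), (-1) ^ j * recipEsymm B j := by
  obtain ⟨E, hE⟩ := hasDensity_siftIndicator hB
  have h := hasDensity_one.mul_bonferroni (by simp) hB (disjoint_empty_left B) k
  rw [empty_union, one_mul] at h
  exact hE.le_of_le h fun n => by simpa using siftIndicator_le_bonferroni hk

lemma sum_recipEsymm_le_siftDensity_add (hB : ∀ p ∈ B, p.Prime) (hk : Even k) :
    ∑ j ∈ range (k + 1), (-1) ^ j * recipEsymm B j ≤ siftDensity B + recipEsymm B (k + 1) := by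
  obtain ⟨E, hE⟩ := hasDensity_siftIndicator hB
  have h := hasDensity_one.mul_bonferroni (by simp) hB (disjoint_empty_left B) k
  have h' := hasDensity_one.mul_choose (by simp) hB (disjoint_empty_left B) (k + 1)
  rw [empty_union, one_mul] at h h'
  exact h.le_of_le (hE.add h') fun n => by simpa using bonferroni_le_siftIndicator_add hk

/-- The integers free of prime factors in `S` admit a lower and an upper bound sieve whose
densities agree with `siftDensity S` up to a factor `1 ± τ`, and whose error terms are at most
`E`. -/
def HasSieve (S : Finset ℕ) (τ E : ℝ) : Prop :=
  ∃ (f g : ℕ → ℝ) (δ ε : ℝ), HasDensity S f δ E ∧ HasDensity S g ε E ∧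
    (∀ n, f n ≤ siftIndicator S n) ∧ (∀ n, siftIndicator S n ≤ g n) ∧
    (1 - τ) * siftDensity S ≤ δ ∧ ε ≤ (1 + τ) * siftDensity S

lemma HasDensity.error_nonneg {f : ℕ → ℝ} {δ : ℝ} (h : HasDensity S f δ E) : 0 ≤ E :=
  (abs_nonneg _).trans (h 1 one_pos (fun p _ => Nat.coprime_one_left p) 0 0 0 le_rfl)

lemma hasSieve_empty : HasSieve ∅ 0 1 :=
  ⟨1, 1, 1, 1, hasDensity_one, hasDensity_one, by simp [siftIndicator], by simp [siftIndicator],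
    by simp [siftDensity], by simp [siftDensity]⟩

-- Hooley's device: `f⁻u - f⁺e` is a lower bound sieve when `u ≥ 1_B` and `u - 1_B ≤ e`.
lemma mul_sub_mul_le_mul {l u s b v e : ℝ} (hl : l ≤ s) (hu : s ≤ u) (hs : 0 ≤ s) (hbv : b ≤ v)
    (hb : b = 1 ∧ v = 1 ∨ b = 0) (hve : v ≤ b + e) (he : 0 ≤ e) : l * v - u * e ≤ s * b := by
  rcases hb with ⟨rfl, rfl⟩ | rfl
  · nlinarith
  · nlinarith [mul_le_mul_of_nonneg_right hl hbv, mul_le_mul_of_nonneg_right hu he]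

lemma mul_bonferroni_sub_mul_choose_le {f g : ℕ → ℝ} {n : ℕ} (hSB : Disjoint S B) (hk : Even k)
    (hf : f n ≤ siftIndicator S n) (hg : siftIndicator S n ≤ g n) :
    f n * bonferroni B k n - g n * (#{p ∈ B | p ∣ n}).choose (k + 1) ≤ siftIndicator (S ∪ B) n := by
  rw [siftIndicator_union hSB]
  refine mul_sub_mul_le_mul hf hg siftIndicator_nonneg
    (siftIndicator_le_bonferroni hk) ?_ (bonferroni_le_siftIndicator_add hk) (by positivity)
  rw [siftIndicator_eq_ite_card]
  split_ifs with h
  · exact .inl ⟨rfl, bonferroni_of_card_eq_zero h⟩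
  · exact .inr rfl

lemma HasSieve.union (h : HasSieve S τ E) (hS : ∀ p ∈ S, p.Prime) (hB : ∀ p ∈ B, p.Prime)
    (hSB : Disjoint S B) (hτ : τ ≤ 1) (hk : Even k)
    (hε : recipEsymm B (k + 1) ≤ ε * siftDensity B) :
    HasSieve (S ∪ B) (τ + 2 * ε) (∑ j ∈ range (k + 2), (#B).choose j * E) := by
  obtain ⟨f, g, δ, η, hf, hg, hfS, hSg, hδ, hη⟩ := h
  set M := ∑ j ∈ range (k + 1), (-1) ^ j * recipEsymm B j
  set e := recipEsymm B (k + 1)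
  have hM : siftDensity B ≤ M := siftDensity_le_sum_recipEsymm hB hk
  have hM' : M ≤ siftDensity B + e := sum_recipEsymm_le_siftDensity_add hB hk
  have he : 0 ≤ e := recipEsymm_nonneg B (k + 1)
  have hVS := siftDensity_pos hS
  have hVB := siftDensity_pos hB
  have hε0 : 0 ≤ ε := nonneg_of_mul_nonneg_left (he.trans hε) hVB
  have hη0 : siftDensity S ≤ η := by
    obtain ⟨F, hF⟩ := hasDensity_siftIndicator hS
    exact hF.le_of_le hg hSg
  have hδ0 : 0 ≤ δ := (mul_nonneg (by linarith) hVS.le).trans hδ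
  have hE := hf.error_nonneg
  have hsplit : ∑ j ∈ range (k + 2), ((#B).choose j : ℝ) * E =
      ∑ j ∈ range (k + 1), (#B).choose j * E + (#B).choose (k + 1) * E := sum_range_succ _ _
  refine ⟨_, _, _, _, ((hf.mul_bonferroni hS hB hSB k).sub
    (hg.mul_choose hS hB hSB (k + 1))).mono_error hsplit.ge,
    (hg.mul_bonferroni hS hB hSB k).mono_error ?_,
    fun n => mul_bonferroni_sub_mul_choose_le hSB hk (hfS n) (hSg n), fun n => ?_, ?_, ?_⟩
  · rw [hsplit]
    exact le_add_of_nonneg_right (by positivity)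
  · rw [siftIndicator_union hSB]
    exact mul_le_mul (hSg n) (siftIndicator_le_bonferroni hk) siftIndicator_nonneg
      (siftIndicator_nonneg.trans (hSg n))
  · rw [siftDensity_union hSB]
    calc (1 - (τ + 2 * ε)) * (siftDensity S * siftDensity B)
        ≤ (1 - τ) * siftDensity S * siftDensity B
          - (1 + τ) * siftDensity S * (ε * siftDensity B) := by
          linarith [mul_le_mul_of_nonneg_right hτ (by positivity :
            0 ≤ ε * (siftDensity S * siftDensity B))]
      _ ≤ δ * M - η * e := by
          gcongr
          exact (hVS.le.trans hη0).trans hη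
  · rw [siftDensity_union hSB]
    calc η * M ≤ (1 + τ) * siftDensity S * (siftDensity B + ε * siftDensity B) :=
          mul_le_mul hη (by linarith) (hVB.le.trans hM) ((hVS.le.trans hη0).trans hη)
      _ ≤ (1 + (τ + 2 * ε)) * (siftDensity S * siftDensity B) := by
          linarith [mul_le_mul_of_nonneg_right hτ (by positivity :
            0 ≤ ε * (siftDensity S * siftDensity B))]

lemma two_pow_mul_recipEsymm_le (B : Finset ℕ) (j : ℕ) :
    2 ^ j * recipEsymm B j ≤ Real.exp (2 * ∑ p ∈ B, (p : ℝ)⁻¹) := by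
  calc 2 ^ j * recipEsymm B j = ∑ T ∈ B.powersetCard j, ∏ p ∈ T, (2 * (p : ℝ)⁻¹) := by
        rw [recipEsymm, mul_sum]
        refine sum_congr rfl fun T hT => ?_
        rw [prod_mul_distrib, prod_const, (mem_powersetCard.1 hT).2]
    _ ≤ ∑ T ∈ B.powerset, ∏ p ∈ T, (2 * (p : ℝ)⁻¹) := by
        refine sum_le_sum_of_subset_of_nonneg
          (fun T hT => mem_powerset.2 (mem_powersetCard.1 hT).1) fun _ _ _ => ?_
        exact prod_nonneg fun _ _ => by positivity
    _ = ∏ p ∈ B, (1 + 2 * (p : ℝ)⁻¹) := (prod_one_add _).symm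
    _ ≤ ∏ p ∈ B, Real.exp (2 * (p : ℝ)⁻¹) :=
        prod_le_prod (fun _ _ => by positivity) fun p _ => by
          linarith [Real.add_one_le_exp (2 * (p : ℝ)⁻¹)]
    _ = Real.exp (2 * ∑ p ∈ B, (p : ℝ)⁻¹) := by rw [mul_sum, Real.exp_sum]

lemma exp_neg_le_siftDensity (hB : ∀ p ∈ B, p.Prime) :
    Real.exp (-(2 * ∑ p ∈ B, (p : ℝ)⁻¹)) ≤ siftDensity B := by
  rw [mul_sum, ← sum_neg_distrib, Real.exp_sum]
  refine prod_le_prod (fun _ _ => (Real.exp_pos _).le) fun p hp => ?_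
  have hp2 : (p : ℝ)⁻¹ ≤ 2⁻¹ := inv_anti₀ two_pos (mod_cast (hB p hp).two_le)
  have hp0 : 0 < (p : ℝ)⁻¹ := inv_pos.2 (mod_cast (hB p hp).pos)
  rw [Real.exp_neg]
  calc (Real.exp (2 * (p : ℝ)⁻¹))⁻¹ ≤ (1 + 2 * (p : ℝ)⁻¹)⁻¹ :=
        inv_anti₀ (by positivity) (by linarith [Real.add_one_le_exp (2 * (p : ℝ)⁻¹)])
    _ ≤ 1 - (p : ℝ)⁻¹ := by
      rw [inv_le_comm₀ (by positivity) (by linarith), inv_le_iff_one_le_mul₀ (by linarith)]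
      nlinarith

lemma sum_inv_primes_dyadic_le {k : ℕ} (hk : 0 < k) :
    ∑ p ∈ (Ico (2 ^ k) (2 ^ (k + 1)) : Finset ℕ) with p.Prime, (p : ℝ)⁻¹ ≤ 4 / k := by
  have := Real.log_pos one_lt_two
  have : (0 : ℝ) < k := mod_cast hk
  calc ∑ p ∈ (Ico (2 ^ k) (2 ^ (k + 1)) : Finset ℕ) with p.Prime, (p : ℝ)⁻¹
      ≤ ∑ p ∈ (Ico (2 ^ k) (2 ^ (k + 1)) : Finset ℕ) with p.Prime,
          Real.log p / (2 ^ k * (k * Real.log 2)) := by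
        refine sum_le_sum fun p hp => ?_
        have hpk : (2 : ℝ) ^ k ≤ p := mod_cast (mem_Ico.1 (mem_filter.1 hp).1).1
        have hp0 : (0 : ℝ) < p := (pow_pos two_pos k).trans_le hpk
        rw [inv_eq_one_div, div_le_div_iff₀ hp0 (by positivity), one_mul, ← Real.log_pow, mul_comm]
        gcongr
    _ ≤ Chebyshev.theta (2 ^ (k + 1)) / (2 ^ k * (k * Real.log 2)) := by
        have htheta := Chebyshev.theta_eq_sum_primesLE_log (2 ^ (k + 1))
        push_cast at htheta
        rw [← sum_div, htheta]
        gcongr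
        intro p hp
        simp only [mem_filter, mem_Ico] at hp
        simp [Nat.mem_primesLE, hp.1.2.le, hp.2]
    _ ≤ Real.log 4 * 2 ^ (k + 1) / (2 ^ k * (k * Real.log 2)) := by
        gcongr
        exact Chebyshev.theta_le_log4_mul_x (by positivity)
    _ = 4 / k := by
        rw [show (4 : ℝ) = 2 ^ 2 by norm_num, Real.log_pow]
        field_simp
        norm_num; ring

lemma sum_inv_primes_Ico_two_pow_le {a b : ℕ} (ha : 0 < a) (hab : a ≤ b) :
    ∑ p ∈ (Ico (2 ^ a) (2 ^ b) : Finset ℕ) with p.Prime, (p : ℝ)⁻¹ ≤ 4 * (b - a) / a := by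
  induction b, hab using Nat.le_induction with
  | base => simp
  | succ b hab ih =>
    simp only [sum_filter] at ih ⊢
    rw [← sum_Ico_consecutive _ (Nat.pow_le_pow_right two_pos hab)
      (Nat.pow_le_pow_right two_pos b.le_succ)]
    have h := sum_inv_primes_dyadic_le (ha.trans_le hab)
    rw [sum_filter] at h
    have : (4 : ℝ) / b ≤ 4 / a := by gcongr
    calc _ ≤ 4 * (b - a : ℝ) / a + 4 / a := add_le_add ih (h.trans this)
      _ = _ := by push_cast; ring

lemma recipEsymm_le_mul_siftDensity (hB : ∀ p ∈ B, p.Prime) (h : ∑ p ∈ B, (p : ℝ)⁻¹ ≤ 4)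
    (j : ℕ) : recipEsymm B j ≤ 2 ^ 24 / 2 ^ j * siftDensity B := by
  have hexp : Real.exp 16 ≤ 2 ^ 24 := by
    have : Real.exp 2 ≤ 8 := by
      rw [show (2 : ℝ) = 1 + 1 by norm_num, Real.exp_add]
      nlinarith [Real.exp_one_lt_d9, Real.exp_pos 1]
    calc Real.exp 16 = Real.exp 2 ^ 8 := by rw [← Real.exp_nat_mul]; norm_num
      _ ≤ 8 ^ 8 := by gcongr
      _ = 2 ^ 24 := by norm_num
  calc recipEsymm B j = 2 ^ j * recipEsymm B j / 2 ^ j := by field_simp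
    _ ≤ Real.exp 8 / 2 ^ j := by
        gcongr
        refine (two_pow_mul_recipEsymm_le B j).trans (Real.exp_le_exp.2 ?_)
        linarith
    _ = Real.exp 16 / 2 ^ j * Real.exp (-8) := by
        rw [div_mul_eq_mul_div, ← Real.exp_add]
        norm_num
    _ ≤ 2 ^ 24 / 2 ^ j * siftDensity B := by
        gcongr
        refine le_trans (Real.exp_le_exp.2 ?_) (exp_neg_le_siftDensity hB)
        linarith

lemma sum_range_choose_le_pow (n k : ℕ) : ∑ j ∈ range (k + 1), n.choose j ≤ (n + 1) ^ k := by
  rw [add_pow]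
  refine sum_le_sum fun j hj => (Nat.choose_le_pow n j).trans ?_
  rw [one_pow, mul_one]
  exact Nat.le_mul_of_pos_right _ (Nat.choose_pos (Nat.lt_succ_iff.1 (mem_range.1 hj)))

lemma HasSieve.mono {σ F : ℝ} (h : HasSieve S τ E) (hS : ∀ p ∈ S, p.Prime) (hτ : τ ≤ σ)
    (hE : E ≤ F) : HasSieve S σ F := by
  obtain ⟨f, g, δ, η, hf, hg, hfS, hSg, hδ, hη⟩ := h
  have := siftDensity_pos hS
  refine ⟨f, g, δ, η, hf.mono_error hE, hg.mono_error hE, hfS, hSg, le_trans ?_ hδ, hη.trans ?_⟩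
    <;> gcongr

lemma HasSieve.union_block (h : HasSieve S τ E) (hS : ∀ p ∈ S, p.Prime) (hB : ∀ p ∈ B, p.Prime)
    (hSB : Disjoint S B) (hτ : τ ≤ 1) {m : ℕ} (hBm : B ⊆ Ico (2 ^ 2 ^ m) (2 ^ 2 ^ (m + 1)))
    (b : ℕ) :
    HasSieve (S ∪ B) (τ + 2 ^ 24 / 4 ^ b) ((2 ^ 2 ^ (m + 1)) ^ (2 * b + 1) * E) := by
  have hsum : ∑ p ∈ B, (p : ℝ)⁻¹ ≤ 4 := by
    have h := sum_inv_primes_Ico_two_pow_le (pow_pos two_pos m)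
      (Nat.pow_le_pow_right two_pos m.le_succ)
    refine (sum_le_sum_of_subset_of_nonneg (fun p hp => ?_) fun _ _ _ => by positivity).trans
      (h.trans_eq ?_)
    · exact mem_filter.2 ⟨hBm hp, hB p hp⟩
    · rw [pow_succ]
      push_cast
      field_simp
      ring
  have hcard : #B + 1 ≤ 2 ^ 2 ^ (m + 1) := by
    have := card_le_card hBm
    rw [Nat.card_Ico] at this
    have : 0 < 2 ^ 2 ^ m := by positivity
    have : 2 ^ 2 ^ m ≤ 2 ^ 2 ^ (m + 1) :=
      Nat.pow_le_pow_right two_pos (Nat.pow_le_pow_right two_pos m.le_succ)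
    omega
  have hε : recipEsymm B (2 * b + 1) ≤ 2 ^ 23 / 4 ^ b * siftDensity B := by
    have hpow : (2 : ℝ) ^ (2 * b + 1) = 4 ^ b * 2 := by rw [pow_succ, pow_mul]; norm_num
    refine (recipEsymm_le_mul_siftDensity hB hsum _).trans_eq ?_
    rw [hpow]
    field_simp
  refine (h.union hS hB hSB hτ (even_two_mul b) hε).mono ?_ (by ring_nf; rfl) ?_
  · intro p hp
    rcases mem_union.1 hp with hp | hp
    exacts [hS p hp, hB p hp]
  · obtain ⟨_, _, _, _, hf, -⟩ := h
    have hE := hf.error_nonneg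
    rw [← sum_mul]
    gcongr
    exact_mod_cast (sum_range_choose_le_pow _ _).trans (Nat.pow_le_pow_left hcard _)

-- Primes in `[2 ^ 2 ^ i, 2 ^ 2 ^ (i + 1))` are sieved with a truncation level that grows as `i`
-- decreases; this keeps the product of the error terms a fixed power of the sifting limit.
theorem hasSieve_of_lt (m : ℕ) {b : ℕ} (hb : 13 ≤ b) (hS : ∀ p ∈ S, p.Prime)
    (hlt : ∀ p ∈ S, p < 2 ^ 2 ^ m) : HasSieve S (2 ^ 25 / 4 ^ b) ((2 ^ 2 ^ m) ^ (4 * b + 6)) := by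
  induction m generalizing b S with
  | zero =>
    obtain rfl : S = ∅ := eq_empty_of_forall_notMem fun p hp =>
      (hlt p hp).not_ge (by simpa using (hS p hp).two_le)
    exact hasSieve_empty.mono hS (by positivity) (one_le_pow₀ (by norm_num))
  | succ m ih =>
    have hS' : ∀ p ∈ {p ∈ S | p < 2 ^ 2 ^ m}, p.Prime := fun p hp => hS p (mem_filter.1 hp).1
    have hB : ∀ p ∈ {p ∈ S | ¬ p < 2 ^ 2 ^ m}, p.Prime := fun p hp => hS p (mem_filter.1 hp).1
    have hτ : (2 : ℝ) ^ 25 / 4 ^ (b + 1) ≤ 1 := by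
      rw [div_le_one (by positivity)]
      calc (2 : ℝ) ^ 25 ≤ 4 ^ 13 := by norm_num
        _ ≤ 4 ^ (b + 1) := pow_le_pow_right₀ (by norm_num) (by omega)
    have h := (ih (b := b + 1) (by omega) hS' fun p hp => (mem_filter.1 hp).2).union_block hS' hB
      (disjoint_filter_filter_not S S (· < 2 ^ 2 ^ m)) hτ (m := m) (fun p hp => ?_) b
    · rw [filter_union_filter_not_eq] at h
      refine h.mono hS ?_ (le_of_eq ?_)
      · rw [pow_succ (4 : ℝ)]
        field_simp
        norm_num
      · simp only [pow_succ 2 m, pow_mul]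
        ring
    · have := mem_filter.1 hp
      exact mem_Ico.2 ⟨not_lt.1 this.2, hlt p this.1⟩

end BrunHooley

section Mertens
variable {S T : Finset ℕ}

lemma siftDensity_primesBelow_le {z : ℕ} (hz : 2 ≤ z) :
    siftDensity z.primesBelow ≤ 1 / Real.log z := by
  have hlog : 0 < Real.log z := Real.log_pos (mod_cast hz)
  have hsum : Real.log z ≤ ∑ n ∈ Ico 1 z, (n : ℝ)⁻¹ := by
    have h := log_add_one_le_harmonic (z - 1)
    rw [harmonic_eq_sum_Icc, Nat.sub_add_cancel (by omega)] at h
    rw [← Icc_sub_one_right_eq_Ico_of_not_isMin (by simp; omega)]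
    push_cast at h
    exact h
  have hprod : ∑ n ∈ Ico 1 z, (n : ℝ)⁻¹ ≤ (siftDensity z.primesBelow)⁻¹ := by
    let f : ℕ →* ℝ := ⟨⟨fun n => (n : ℝ)⁻¹, by simp⟩, fun m n => by simp [mul_comm]⟩
    obtain ⟨-, h⟩ := EulerProduct.summable_and_hasSum_smoothNumbers_prod_primesBelow_geometric
      (f := f)
      (fun {p} hp => by simpa [f] using inv_lt_one_of_one_lt₀ (by exact_mod_cast hp.one_lt)) z
    have h' := sum_le_hasSum ((Ico 1 z).subtype (· ∈ z.smoothNumbers))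
      (fun n _ => by simp [f]) h
    rw [sum_subtype_of_mem (fun n => f n) fun n hn =>
      Nat.mem_smoothNumbers_of_lt (mem_Ico.1 hn).1 (mem_Ico.1 hn).2] at h'
    simpa [siftDensity, f] using h'
  rw [le_div_iff₀ hlog]
  have hpos := siftDensity_pos (S := z.primesBelow) fun p hp => Nat.prime_of_mem_primesBelow hp
  calc siftDensity z.primesBelow * Real.log z
      ≤ siftDensity z.primesBelow * (siftDensity z.primesBelow)⁻¹ := by
        gcongr; exact hsum.trans hprod
    _ = 1 := mul_inv_cancel₀ hpos.ne'

lemma siftDensity_sdiff_le (hT : ∀ p ∈ T, p.Prime) (hS : ∀ p ∈ S, p.Prime) :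
    siftDensity (T \ S) ≤ siftDensity T * Real.exp (∑ p ∈ S, 1 / ((p : ℝ) - 1)) := by
  have hone : ∀ p ∈ S, 1 ≤ (1 - (p : ℝ)⁻¹) * Real.exp (1 / ((p : ℝ) - 1)) := by
    intro p hp
    have hp1 : (1 : ℝ) < p := mod_cast (hS p hp).one_lt
    have h := Real.add_one_le_exp (1 / ((p : ℝ) - 1))
    have h0 : (0 : ℝ) < p - 1 := by linarith
    have h1 : 0 ≤ 1 - (p : ℝ)⁻¹ := by linarith [inv_le_one_of_one_le₀ hp1.le]
    calc (1 : ℝ) = (1 - (p : ℝ)⁻¹) * (1 / ((p : ℝ) - 1) + 1) := by field_simp; ring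
      _ ≤ _ := by gcongr
  have hprod : 1 ≤ siftDensity (T ∩ S) * Real.exp (∑ p ∈ T ∩ S, 1 / ((p : ℝ) - 1)) := by
    rw [siftDensity, Real.exp_sum, ← prod_mul_distrib]
    exact one_le_prod fun p hp => hone p (mem_inter.1 hp).2
  have hexp : ∑ p ∈ T ∩ S, 1 / ((p : ℝ) - 1) ≤ ∑ p ∈ S, 1 / ((p : ℝ) - 1) :=
    sum_le_sum_of_subset_of_nonneg inter_subset_right fun p hp _ => by
      have : (1 : ℝ) < p := mod_cast (hS p hp).one_lt
      exact one_div_nonneg.2 (by linarith)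
  have hpos := siftDensity_pos (S := T \ S) fun p hp => hT p (mem_sdiff.1 hp).1
  have hsplit : siftDensity T = siftDensity (T \ S) * siftDensity (T ∩ S) :=
    ((mul_comm _ _).trans (prod_inter_mul_prod_sdiff T S _)).symm
  have hpos' := siftDensity_pos (S := T ∩ S) fun p hp => hT p (mem_inter.1 hp).1
  calc siftDensity (T \ S)
      ≤ siftDensity (T \ S) *
          (siftDensity (T ∩ S) * Real.exp (∑ p ∈ T ∩ S, 1 / ((p : ℝ) - 1))) :=
        le_mul_of_one_le_right hpos.le hprod
    _ ≤ siftDensity (T \ S) *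
          (siftDensity (T ∩ S) * Real.exp (∑ p ∈ S, 1 / ((p : ℝ) - 1))) := by gcongr
    _ = _ := by rw [hsplit]; ring

end Mertens

/-- The sum of `f` over the elements of `s` in the residue class `a`. -/
def residueSum (s : Finset ℕ) (f : ℕ → ℝ) {d : ℕ} (a : ZMod d) : ℝ :=
  ∑ n ∈ s.filter fun n : ℕ => (n : ZMod d) = a, f n

section Residues
variable {ν : ℕ → ℝ} {N d d' : ℕ} {Q E : ℝ} {P : Finset ℕ}

lemma sum_mul_natCast_eq_sum_residueSum [NeZero d] (s : Finset ℕ) (f : ℕ → ℝ) (g : ZMod d → ℝ) :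
    ∑ n ∈ s, f n * g n = ∑ a, g a * residueSum s f a := by
  rw [← sum_fiberwise s (fun n : ℕ => (n : ZMod d)) fun n => f n * g n]
  refine sum_congr rfl fun a _ => ?_
  rw [residueSum, mul_sum]
  exact sum_congr rfl fun n hn => by rw [(mem_filter.1 hn).2, mul_comm]

lemma HasDensity.abs_residueSum_sub_le [NeZero d] (h : HasDensity P ν Q E)
    (hd : ∀ p ∈ P, d.Coprime p) (a : ZMod d) :
    |residueSum (Ioc 0 N) ν a - N / d * Q| ≤ E := by
  have h := h d (NeZero.pos d) hd 0 N a.val N.zero_le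
  simpa [residueSum, ← ZMod.natCast_eq_natCast_iff] using h

lemma HasDensity.abs_residueSum_residueSum_sub_le [NeZero d] [NeZero d'] (h : HasDensity P ν Q E)
    (hd : ∀ p ∈ P, d.Coprime p) (hd' : ∀ p ∈ P, d'.Coprime p) (hdd' : d.Coprime d')
    (a : ZMod d) (b : ZMod d') :
    |residueSum ((Ioc 0 N).filter fun n : ℕ => (n : ZMod d) = a) ν b - N / (d * d') * Q| ≤ E := by
  obtain ⟨c, hca, hcb⟩ := Nat.chineseRemainder hdd' a.val b.val
  have h := h (d * d') (mul_pos (NeZero.pos d) (NeZero.pos d'))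
    (fun p hp => (hd p hp).mul_left (hd' p hp)) 0 N c N.zero_le
  have hiff : ∀ n : ℕ, n ≡ c [MOD d * d'] ↔ (n : ZMod d) = a ∧ (n : ZMod d') = b := by
    intro n
    rw [← Nat.modEq_and_modEq_iff_modEq_mul hdd', ← ZMod.natCast_eq_natCast_iff,
      ← ZMod.natCast_eq_natCast_iff, (ZMod.natCast_eq_natCast_iff _ _ _).2 hca,
      (ZMod.natCast_eq_natCast_iff _ _ _).2 hcb, ZMod.natCast_zmod_val, ZMod.natCast_zmod_val]
  simpa [residueSum, hiff, filter_filter] using h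

lemma HasDensity.sum_mul_sq_le [NeZero d] (h : HasDensity P ν Q E)
    (hd : ∀ p ∈ P, d.Coprime p) (g : ZMod d → ℝ) :
    ∑ n ∈ Ioc 0 N, ν n * g n ^ 2 ≤ (N / d * Q + E) * ∑ a, g a ^ 2 := by
  rw [sum_mul_natCast_eq_sum_residueSum _ _ (fun a => g a ^ 2), mul_sum]
  refine sum_le_sum fun a _ => ?_
  rw [mul_comm]
  gcongr
  linarith [(abs_le.1 (h.abs_residueSum_sub_le (N := N) hd a)).2]

lemma HasDensity.abs_sum_mul_mul_le [NeZero d] [NeZero d'] (h : HasDensity P ν Q E)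
    (hd : ∀ p ∈ P, d.Coprime p) (hd' : ∀ p ∈ P, d'.Coprime p) (hdd' : d.Coprime d')
    {g : ZMod d → ℝ} {g' : ZMod d' → ℝ} (hg : ∑ a, g a = 0) :
    |∑ n ∈ Ioc 0 N, ν n * (g n * g' n)| ≤ E * ((∑ a, |g a|) * ∑ b, |g' b|) := by
  let W (a : ZMod d) (b : ZMod d') : ℝ :=
    residueSum ((Ioc 0 N).filter fun n : ℕ => (n : ZMod d) = a) ν b
  have hclass : ∑ n ∈ Ioc 0 N, ν n * (g n * g' n) = ∑ a, ∑ b, g a * g' b * W a b := by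
    rw [← sum_fiberwise (Ioc 0 N) (fun n : ℕ => (n : ZMod d)) fun n => ν n * (g n * g' n)]
    refine sum_congr rfl fun a _ => ?_
    rw [sum_congr rfl fun n hn => by rw [(mem_filter.1 hn).2, mul_left_comm], ← mul_sum,
      sum_mul_natCast_eq_sum_residueSum, mul_sum]
    simp only [mul_assoc, W]
  have hmain : ∑ a, ∑ b, g a * g' b * (N / (d * d') * Q) = 0 := by
    simp only [← sum_mul, ← mul_sum, hg, zero_mul]
  rw [← sub_zero (∑ n ∈ Ioc 0 N, _), ← hmain, hclass, sum_mul_sum, mul_sum, ← sum_sub_distrib]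
  refine (abs_sum_le_sum_abs _ _).trans (sum_le_sum fun a _ => ?_)
  rw [mul_sum, ← sum_sub_distrib]
  refine (abs_sum_le_sum_abs _ _).trans (sum_le_sum fun b _ => ?_)
  rw [← mul_sub, abs_mul, abs_mul, mul_comm]
  gcongr
  exact h.abs_residueSum_residueSum_sub_le hd hd' hdd' a b

end Residues

section Dual
variable {ι : Type*} {s : Finset ι} {d : ι → ℕ} {ν : ℕ → ℝ} {N : ℕ} {Q E : ℝ} {P : Finset ℕ}

lemma HasDensity.sum_mul_mul_mul_le [∀ i, NeZero (d i)] [DecidableEq ι] (h : HasDensity P ν Q E)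
    (hP : ∀ i ∈ s, ∀ p ∈ P, (d i).Coprime p)
    (hd : (s : Set ι).Pairwise fun i j => (d i).Coprime (d j)) {g : ∀ i, ZMod (d i) → ℝ}
    (hg : ∀ i ∈ s, ∑ a, g i a = 0) {i j : ι} (hi : i ∈ s) (hj : j ∈ s) :
    ∑ n ∈ Ioc 0 N, ν n * (g i n * g j n) ≤
      (if i = j then N / d i * Q * ∑ a, g i a ^ 2 else 0) +
        E * ((∑ a, |g i a|) * ∑ a, |g j a|) := by
  have hE := h.error_nonneg
  split_ifs with hij
  · subst hij
    have hsq : ∑ a, g i a ^ 2 ≤ (∑ a, |g i a|) * ∑ a, |g i a| := by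
      simpa [sq] using sum_sq_le_sq_sum_of_nonneg (s := univ) fun a _ => abs_nonneg (g i a)
    calc ∑ n ∈ Ioc 0 N, ν n * (g i n * g i n) ≤ (N / d i * Q + E) * ∑ a, g i a ^ 2 := by
          simpa only [sq] using h.sum_mul_sq_le (hP i hi) (g i)
      _ ≤ _ := by rw [add_mul]; gcongr
  · rw [zero_add]
    exact (le_abs_self _).trans
      (h.abs_sum_mul_mul_le (hP i hi) (hP j hj) (hd hi hj hij) (hg i hi))

lemma sq_sum_mul_sum_abs_le [∀ i, NeZero (d i)] (s : Finset ι) (g : ∀ i, ZMod (d i) → ℝ) :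
    (∑ i ∈ s, d i * ∑ a, |g i a|) ^ 2 ≤
      (∑ i ∈ s, (d i : ℝ) ^ 2) * ∑ i ∈ s, d i * ∑ a, g i a ^ 2 := by
  refine sum_sq_le_sum_mul_sum_of_sq_le_mul s (fun i _ => by positivity)
    (fun i _ => by positivity) fun i _ => ?_
  have h := sq_sum_le_card_mul_sum_sq (s := univ) (f := fun a => |g i a|)
  simp only [card_univ, ZMod.card, sq_abs] at h
  calc ((d i : ℝ) * ∑ a, |g i a|) ^ 2 = (d i : ℝ) ^ 2 * (∑ a, |g i a|) ^ 2 := mul_pow ..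
    _ ≤ (d i : ℝ) ^ 2 * (d i * ∑ a, g i a ^ 2) := by gcongr

-- The dual form of the large sieve; expanding the square, `∑ a, g i a = 0` kills the main terms
-- off the diagonal.
theorem HasDensity.sum_mul_sq_sum_le [∀ i, NeZero (d i)] (h : HasDensity P ν Q E)
    (hP : ∀ i ∈ s, ∀ p ∈ P, (d i).Coprime p)
    (hd : (s : Set ι).Pairwise fun i j => (d i).Coprime (d j)) {g : ∀ i, ZMod (d i) → ℝ}
    (hg : ∀ i ∈ s, ∑ a, g i a = 0) :
    ∑ n ∈ Ioc 0 N, ν n * (∑ i ∈ s, d i * g i n) ^ 2 ≤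
      (N * Q + E * ∑ i ∈ s, (d i : ℝ) ^ 2) * ∑ i ∈ s, d i * ∑ a, g i a ^ 2 := by
  classical
  have hE := h.error_nonneg
  have hexpand : ∑ n ∈ Ioc 0 N, ν n * (∑ i ∈ s, d i * g i n) ^ 2 =
      ∑ i ∈ s, ∑ j ∈ s, d i * d j * ∑ n ∈ Ioc 0 N, ν n * (g i n * g j n) := by
    simp_rw [sq, sum_mul_sum]
    simp_rw [mul_sum]
    rw [sum_comm]
    refine sum_congr rfl fun i _ => ?_
    rw [sum_comm]
    exact sum_congr rfl fun j _ => sum_congr rfl fun n _ => by ring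
  have hterm : ∀ i ∈ s, ∀ j ∈ s, (d i * d j * ∑ n ∈ Ioc 0 N, ν n * (g i n * g j n) : ℝ) ≤
      (if i = j then N * Q * (d i * ∑ a, g i a ^ 2) else 0) +
        E * ((d i * ∑ a, |g i a|) * (d j * ∑ a, |g j a|)) := by
    intro i hi j hj
    refine (mul_le_mul_of_nonneg_left (h.sum_mul_mul_mul_le hP hd hg hi hj)
      (by positivity)).trans_eq ?_
    have hdi : (d i : ℝ) ≠ 0 := NeZero.ne _
    split_ifs with hij
    · subst hij; field_simp
    · ring
  calc _ ≤ ∑ i ∈ s, ∑ j ∈ s, ((if i = j then N * Q * (d i * ∑ a, g i a ^ 2) else 0) +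
        E * ((d i * ∑ a, |g i a|) * (d j * ∑ a, |g j a|))) := by
        rw [hexpand]
        exact sum_le_sum fun i hi => sum_le_sum fun j hj => hterm i hi j hj
    _ = N * Q * (∑ i ∈ s, d i * ∑ a, g i a ^ 2) + E * (∑ i ∈ s, d i * ∑ a, |g i a|) ^ 2 := by
        simp_rw [sum_add_distrib, sum_ite_eq, ← mul_sum, ← sum_mul, sq (∑ _ ∈ s, _), mul_sum s]
        rw [sum_congr rfl fun _ hi => if_pos hi]
    _ ≤ _ := by
        rw [add_mul, mul_assoc E]
        gcongr
        exact sq_sum_mul_sum_abs_le s g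

end Dual

/-- How far the sum of `f` over the elements of `s` in the residue class `a` is from what an equal
distribution of `f` among the nonzero residue classes modulo the prime `d` would give. -/
noncomputable def discrepancy (s : Finset ℕ) (f : ℕ → ℝ) {d : ℕ} (a : ZMod d) : ℝ :=
  residueSum s f a - if a = 0 then 0 else (∑ n ∈ s, f n) / (d - 1)

section Discrepancy
variable {d : ℕ} [Fact d.Prime] {s t : Finset ℕ} {f α β : ℕ → ℝ}

lemma cast_prime_sub_one_pos (d : ℕ) [hd : Fact d.Prime] : (0 : ℝ) < d - 1 :=
  sub_pos.2 (mod_cast hd.out.one_lt)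

lemma sum_ite_eq_zero_else (g : ZMod d → ℝ) (c : ℝ) :
    ∑ a, g a * (if a = 0 then 0 else c) = (∑ a, g a - g 0) * c := by
  simp [mul_ite, sum_ite, filter_ne', sum_erase_eq_sub, ← sum_mul]

lemma sum_mul_natCast_eq_sum_mul_discrepancy (g : ZMod d → ℝ) :
    ∑ n ∈ s, f n * g n =
      ∑ a, g a * discrepancy s f a + (∑ a, g a - g 0) * ((∑ n ∈ s, f n) / (d - 1)) := by
  rw [sum_mul_natCast_eq_sum_residueSum, ← sum_ite_eq_zero_else, ← sum_add_distrib]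
  exact sum_congr rfl fun a _ => by rw [discrepancy]; ring

lemma sum_discrepancy (s : Finset ℕ) (f : ℕ → ℝ) : ∑ a : ZMod d, discrepancy s f a = 0 := by
  have h := sum_mul_natCast_eq_sum_mul_discrepancy (s := s) (f := f) (fun _ : ZMod d => 1)
  have hd := cast_prime_sub_one_pos d
  simp only [mul_one, one_mul, sum_const, card_univ, ZMod.card, nsmul_eq_mul,
    mul_div_cancel₀ _ hd.ne'] at h
  linarith

lemma discrepancy_zero (hf : ∀ n ∈ s, d ∣ n → f n = 0) : discrepancy s f (0 : ZMod d) = 0 := by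
  rw [discrepancy, if_pos rfl, sub_zero, residueSum]
  refine sum_eq_zero fun n hn => ?_
  rw [mem_filter, ZMod.natCast_eq_zero_iff] at hn
  exact hf n hn.1 hn.2

lemma sum_mul_discrepancy (hf : ∀ n ∈ s, d ∣ n → f n = 0) :
    ∑ n ∈ s, f n * discrepancy s f (n : ZMod d) = ∑ a : ZMod d, discrepancy s f a ^ 2 := by
  rw [sum_mul_natCast_eq_sum_mul_discrepancy, sum_discrepancy, discrepancy_zero hf]
  simp [sq]

lemma sum_sum_ite_mul_eq_one_sub (hα : ∀ n ∈ s, d ∣ n → α n = 0) (hβ : ∀ n ∈ t, d ∣ n → β n = 0) :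
    ∑ i ∈ s, ∑ m ∈ t, (if (i * m : ZMod d) = 1 then α i * β m else 0) -
      (∑ i ∈ s, α i) * (∑ m ∈ t, β m) / (d - 1) =
    ∑ a : ZMod d, discrepancy s α a * discrepancy t β a⁻¹ := by
  have hinner : ∀ i ∈ s, ∑ m ∈ t, (if (i * m : ZMod d) = 1 then α i * β m else 0) =
      α i * (discrepancy t β (i : ZMod d)⁻¹ + (∑ m ∈ t, β m) / (d - 1)) := by
    intro i hi
    by_cases hdi : d ∣ i
    · simp [hα i hi hdi]
    · have hi0 : (i : ZMod d) ≠ 0 := by rwa [Ne, ZMod.natCast_eq_zero_iff]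
      rw [discrepancy, if_neg (inv_ne_zero hi0), sub_add_cancel, residueSum, sum_filter, mul_sum]
      refine sum_congr rfl fun m _ => ?_
      simp only [mul_comm (i : ZMod d), mul_eq_one_iff_eq_inv₀ hi0, mul_ite, mul_zero]
  rw [sum_congr rfl hinner]
  simp only [mul_add, sum_add_distrib, ← sum_mul]
  rw [sum_mul_natCast_eq_sum_mul_discrepancy fun a : ZMod d => discrepancy t β a⁻¹,
    inv_involutive.bijective.sum_comp (discrepancy t β), sum_discrepancy, inv_zero,
    discrepancy_zero hβ, mul_div_assoc]
  simp [mul_comm]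

end Discrepancy

section LargeSieve
variable {ι : Type*} {I : Finset ι} {d : ι → ℕ} [∀ i, Fact (d i).Prime]

theorem HasDensity.sum_sq_discrepancy_le {P : Finset ℕ} {ν f : ℕ → ℝ} {N : ℕ} {Q E : ℝ}
    (h : HasDensity P ν Q E) (hν : ∀ n, 0 ≤ ν n) (hP : ∀ i ∈ I, ∀ p ∈ P, (d i).Coprime p)
    (hd : (I : Set ι).Pairwise fun i j => (d i).Coprime (d j))
    (hfν : ∀ n ∈ Ioc 0 N, f n ≠ 0 → 1 ≤ ν n)
    (hfd : ∀ i ∈ I, ∀ n ∈ Ioc 0 N, d i ∣ n → f n = 0) :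
    ∑ i ∈ I, d i * ∑ a : ZMod (d i), discrepancy (Ioc 0 N) f a ^ 2 ≤
      (N * Q + E * ∑ i ∈ I, (d i : ℝ) ^ 2) * ∑ n ∈ Ioc 0 N, f n ^ 2 := by
  set V := ∑ i ∈ I, d i * ∑ a : ZMod (d i), discrepancy (Ioc 0 N) f a ^ 2 with hV
  set K := N * Q + E * ∑ i ∈ I, (d i : ℝ) ^ 2
  let G (n : ℕ) : ℝ := ∑ i ∈ I, d i * discrepancy (Ioc 0 N) f (n : ZMod (d i))
  have hdual : ∑ n ∈ Ioc 0 N, ν n * G n ^ 2 ≤ K * V :=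
    h.sum_mul_sq_sum_le hP hd fun i _ => sum_discrepancy _ _
  have hVG : V = ∑ n ∈ Ioc 0 N, f n * G n := by
    simp only [hV, G, mul_sum (s := I)]
    rw [sum_comm]
    refine sum_congr rfl fun i hi => ?_
    rw [← sum_mul_discrepancy (hfd i hi), mul_sum]
    exact sum_congr rfl fun n _ => by ring
  have hcauchy : V ^ 2 ≤ (∑ n ∈ Ioc 0 N, f n ^ 2) * ∑ n ∈ Ioc 0 N, ν n * G n ^ 2 := by
    rw [hVG]
    refine sum_sq_le_sum_mul_sum_of_sq_le_mul _ (fun n _ => sq_nonneg _)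
      (fun n _ => mul_nonneg (hν n) (sq_nonneg _)) fun n hn => ?_
    rcases eq_or_ne (f n) 0 with hf | hf
    · simp [hf]
    · rw [mul_pow]
      gcongr
      exact le_mul_of_one_le_left (sq_nonneg _) (hfν n hn hf)
  have hV0 : 0 ≤ V := by positivity
  have hK0 : 0 ≤ K := by
    have hQ : 0 ≤ Q := by
      simpa using (hasDensity_one.mono_set (empty_subset P)).const_mul 0 |>.le_of_le h
        (by simpa using hν)
    have := h.error_nonneg
    positivity
  have hmain : V * V ≤ (K * ∑ n ∈ Ioc 0 N, f n ^ 2) * V := by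
    calc V * V = V ^ 2 := (sq V).symm
      _ ≤ (∑ n ∈ Ioc 0 N, f n ^ 2) * (K * V) := hcauchy.trans (by gcongr)
      _ = _ := by ring
  rcases hV0.eq_or_lt with hV0 | hV0
  · rw [← hV0]; positivity
  · exact le_of_mul_le_mul_right hmain hV0

theorem sq_sum_abs_bilinear_le {s t : Finset ℕ} {α β : ℕ → ℝ}
    (hα : ∀ i ∈ I, ∀ n ∈ s, d i ∣ n → α n = 0) (hβ : ∀ i ∈ I, ∀ n ∈ t, d i ∣ n → β n = 0) :
    (∑ i ∈ I, |((d i : ℝ) - 1) * ∑ k ∈ s, ∑ m ∈ t,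
        (if (k * m : ZMod (d i)) = 1 then α k * β m else 0) -
          (∑ k ∈ s, α k) * ∑ m ∈ t, β m|) ^ 2 ≤
      (∑ i ∈ I, d i * ∑ a : ZMod (d i), discrepancy s α a ^ 2) *
        ∑ i ∈ I, d i * ∑ a : ZMod (d i), discrepancy t β a ^ 2 := by
  refine sum_sq_le_sum_mul_sum_of_sq_le_mul I (fun i _ => by positivity)
    (fun i _ => by positivity) fun i hi => ?_
  have hd := cast_prime_sub_one_pos (d i)
  have hinv : ∑ a : ZMod (d i), discrepancy t β a⁻¹ ^ 2 = ∑ a : ZMod (d i), discrepancy t β a ^ 2 :=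
    inv_involutive.bijective.sum_comp fun a : ZMod (d i) => discrepancy t β a ^ 2
  have heq := sum_sum_ite_mul_eq_one_sub (hα i hi) (hβ i hi)
  rw [eq_comm, eq_sub_iff_add_eq, eq_comm] at heq
  rw [heq, mul_add, mul_div_cancel₀ _ hd.ne', add_sub_cancel_right, sq_abs, mul_pow,
    sq (d i - 1 : ℝ), ← hinv, mul_mul_mul_comm]
  gcongr
  · linarith
  · linarith
  · exact sum_mul_sq_le_sq_mul_sq ..

end LargeSieve

/-- The sifting levels `2 ^ 2 ^ m`. -/
def level (m : ℕ) : ℕ := 2 ^ 2 ^ m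

/-- The indicator function of the integers all of whose prime factors are at least `z`. -/
def roughIndicator (z n : ℕ) : ℝ := siftIndicator z.primesBelow n

section Level

lemma level_add (m k : ℕ) : level (m + k) = level m ^ 2 ^ k := by
  rw [level, level, ← pow_mul, pow_add]

lemma two_le_level (m : ℕ) : 2 ≤ level m :=
  Nat.le_self_pow (by positivity) 2

lemma level_strictMono : StrictMono level := fun _ _ h =>
  Nat.pow_lt_pow_right one_lt_two (Nat.pow_lt_pow_right one_lt_two h)

lemma log_level (m : ℕ) : Real.log (level m) = 2 ^ m * Real.log 2 := by
  simp [level]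

lemma log_level_pos (m : ℕ) : 0 < Real.log (level m) :=
  Real.log_pos (mod_cast two_le_level m)

end Level

section Rough
variable {z n k : ℕ}

lemma roughIndicator_nonneg : 0 ≤ roughIndicator z n := siftIndicator_nonneg

lemma roughIndicator_le_one : roughIndicator z n ≤ 1 := siftIndicator_le_one

lemma roughIndicator_ne_zero_iff : roughIndicator z n ≠ 0 ↔ ∀ p, p.Prime → p ∣ n → z ≤ p := by
  simp only [roughIndicator, siftIndicator_ne_zero_iff, Nat.mem_primesBelow, and_imp]
  exact forall_congr' fun p => by grind

lemma roughIndicator_mul (z n k : ℕ) :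
    roughIndicator z (n * k) = roughIndicator z n * roughIndicator z k := by
  simp only [roughIndicator, siftIndicator, ← prod_mul_distrib]
  refine prod_congr rfl fun p hp => ?_
  simp only [(Nat.prime_of_mem_primesBelow hp).dvd_mul]
  split_ifs <;> simp_all

lemma roughIndicator_eq_one_of_prime (hn : n.Prime) (h : z ≤ n) : roughIndicator z n = 1 := by
  refine siftIndicator_eq_ite.trans (if_pos fun p hp hpn => ?_)
  rw [Nat.mem_primesBelow] at hp
  exact (((Nat.prime_dvd_prime_iff_eq hp.2 hn).1 hpn ▸ hp.1).not_ge h)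

lemma le_of_roughIndicator_ne_zero (hn : 1 < n) (h : roughIndicator z n ≠ 0) : z ≤ n :=
  (roughIndicator_ne_zero_iff.1 h _ (n.minFac_prime hn.ne') n.minFac_dvd).trans
    (Nat.minFac_le (by omega))

end Rough

section Equidistribution
variable {S : Finset ℕ} {τ E : ℝ} {a b c d x : ℕ}

lemma HasSieve.abs_sum_siftIndicator_sub_le (h : HasSieve S τ E) (hd : 0 < d)
    (hdS : ∀ p ∈ S, d.Coprime p) (hab : a ≤ b) :
    |∑ n ∈ Ioc a b with n ≡ c [MOD d], siftIndicator S n - ((b : ℝ) - a) / d * siftDensity S| ≤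
      ((b : ℝ) - a) / d * (τ * siftDensity S) + E := by
  obtain ⟨f, g, δ, ε, hf, hg, hfS, hSg, hδ, hε⟩ := h
  have hf' := (abs_le.1 (hf d hd hdS a b c hab)).1
  have hg' := (abs_le.1 (hg d hd hdS a b c hab)).2
  have hfs := sum_le_sum fun n (_ : n ∈ (Ioc a b).filter (· ≡ c [MOD d])) => hfS n
  have hgs := sum_le_sum fun n (_ : n ∈ (Ioc a b).filter (· ≡ c [MOD d])) => hSg n
  have hX : 0 ≤ ((b : ℝ) - a) / d := div_nonneg (sub_nonneg.2 (mod_cast hab)) d.cast_nonneg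
  have hδ' := mul_le_mul_of_nonneg_left hδ hX
  have hε' := mul_le_mul_of_nonneg_left hε hX
  rw [abs_le]
  constructor <;> linarith

lemma HasSieve.sum_siftIndicator_le (h : HasSieve S τ E) (hab : a ≤ b) :
    ∑ n ∈ Ioc a b, siftIndicator S n ≤ ((b : ℝ) - a) * ((1 + τ) * siftDensity S) + E := by
  have h := (abs_le.1 (h.abs_sum_siftIndicator_sub_le one_pos (c := 0) (by simp) hab)).2
  simp only [Nat.modEq_one, filter_true, Nat.cast_one, div_one] at h
  linarith

-- In the class of `1` modulo `d`, the sieve leaves out `d`, which costs nothing there.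
lemma HasSieve.abs_sum_sub_mul_sum_modEq_one_le (h : HasSieve S τ E)
    (h' : HasSieve (S.erase d) τ E) (hS : ∀ p ∈ S, p.Prime) (hd : d ∈ S) (hab : a ≤ b) :
    |∑ n ∈ Ioc a b, siftIndicator S n -
      ((d : ℝ) - 1) * ∑ n ∈ Ioc a b with n ≡ 1 [MOD d], siftIndicator S n| ≤
      2 * (((b : ℝ) - a) * (τ * siftDensity S)) + d * E := by
  have hd1 : (1 : ℝ) < d := mod_cast (hS d hd).one_lt
  have hall := h.abs_sum_siftIndicator_sub_le one_pos (c := 0) (by simp) hab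
  have hclass := h'.abs_sum_siftIndicator_sub_le (hS d hd).pos (c := 1) (fun p hp =>
    (Nat.coprime_primes (hS d hd) (hS p (mem_of_mem_erase hp))).2 (ne_of_mem_erase hp).symm) hab
  have herase : ∑ n ∈ Ioc a b with n ≡ 1 [MOD d], siftIndicator (S.erase d) n =
      ∑ n ∈ Ioc a b with n ≡ 1 [MOD d], siftIndicator S n := by
    refine sum_congr rfl fun n hn => ?_
    have hdn : ¬ d ∣ n := fun hdn => (hS d hd).one_lt.ne' <| Nat.dvd_one.1 <|
      ((mem_filter.1 hn).2.dvd_iff dvd_rfl).1 hdn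
    rw [siftIndicator, siftIndicator, ← mul_prod_erase S _ hd, if_neg hdn, one_mul]
  have hdens : siftDensity (S.erase d) = d / (d - 1) * siftDensity S := by
    rw [siftDensity, siftDensity, ← mul_prod_erase S _ hd]
    have : (d : ℝ) - 1 ≠ 0 := by linarith
    field_simp
  rw [herase, hdens] at hclass
  simp only [Nat.modEq_one, filter_true, Nat.cast_one, div_one] at hall
  have hmul := mul_le_mul_of_nonneg_left hclass (sub_nonneg.2 hd1.le)
  rw [← abs_of_nonneg (sub_nonneg.2 hd1.le), ← abs_mul, abs_of_nonneg (sub_nonneg.2 hd1.le)] at hmul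
  have hE : 0 ≤ E := by obtain ⟨f, g, δ, ε, hf, -⟩ := h; exact hf.error_nonneg
  have hne : (d : ℝ) - 1 ≠ 0 := by linarith
  have hmain : ((d : ℝ) - 1) * (((b : ℝ) - a) / d * (d / (d - 1) * siftDensity S)) =
      ((b : ℝ) - a) * siftDensity S := by field_simp
  have herror : ((d : ℝ) - 1) * (((b : ℝ) - a) / d * (τ * (d / (d - 1) * siftDensity S))) =
      ((b : ℝ) - a) * (τ * siftDensity S) := by field_simp
  rw [mul_sub, hmain, mul_add, herror] at hmul
  rw [abs_le] at *
  constructor <;> nlinarith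

lemma HasSieve.sum_mul_log_le (h : HasSieve S τ E)
    (h' : HasSieve (S.erase d) τ E) (hS : ∀ p ∈ S, p.Prime) (hd : d ∈ S) (hx : 0 < x) :
    ∑ n ∈ Ioc x (4 * x), siftIndicator S n * Real.log n ≤
      (d - 1) * ∑ n ∈ Ioc x (4 * x) with n ≡ 1 [MOD d], siftIndicator S n * Real.log n +
        Real.log 4 * ∑ n ∈ Ioc x (4 * x), siftIndicator S n +
        Real.log x * (2 * (3 * x * (τ * siftDensity S)) + d * E) := by
  have hd1 : (1 : ℝ) < d := mod_cast (hS d hd).one_lt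
  have hx' : (1 : ℝ) ≤ x := mod_cast hx
  have hlog : ∀ n ∈ Ioc x (4 * x), Real.log n ≤ Real.log 4 + Real.log x := by
    intro n hn
    rw [mem_Ioc] at hn
    rw [← Real.log_mul (by norm_num) (by positivity)]
    exact Real.log_le_log (mod_cast hx.trans hn.1) (mod_cast hn.2)
  have hupper : ∑ n ∈ Ioc x (4 * x), siftIndicator S n * Real.log n ≤
      (∑ n ∈ Ioc x (4 * x), siftIndicator S n) * (Real.log 4 + Real.log x) := by
    rw [sum_mul]
    gcongr with n hn
    · exact siftIndicator_nonneg
    · exact hlog n hn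
  have hlower : (∑ n ∈ Ioc x (4 * x) with n ≡ 1 [MOD d], siftIndicator S n) * Real.log x ≤
      ∑ n ∈ Ioc x (4 * x) with n ≡ 1 [MOD d], siftIndicator S n * Real.log n := by
    rw [sum_mul]
    gcongr with n hn
    · exact siftIndicator_nonneg
    · exact (mem_Ioc.1 (mem_filter.1 hn).1).1.le
  have hcount := (abs_le.1 (h.abs_sum_sub_mul_sum_modEq_one_le h' hS hd
    (show x ≤ 4 * x by omega))).2
  have hX : ((4 * x : ℕ) : ℝ) - x = 3 * x := by push_cast; ring
  rw [hX] at hcount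
  have hcount' := mul_le_mul_of_nonneg_left hcount (Real.log_nonneg hx')
  have hlower' := mul_le_mul_of_nonneg_left hlower (sub_nonneg.2 hd1.le)
  linarith

end Equidistribution

/-- The `d i` with `i ∈ I` are distinct numbers up to `w`, so few that dropping them from the
primes used in a sieve costs only a bounded factor. -/
structure IsSparse {ι : Type*} (I : Finset ι) (d : ι → ℕ) (w : ℕ) : Prop where
  injOn : Set.InjOn d I
  le : ∀ i ∈ I, d i ≤ w
  sum_le : ∑ i ∈ I, 1 / ((d i : ℝ) - 1) ≤ 2

section Sparse
variable {ι : Type*} {I : Finset ι} {d : ι → ℕ} [∀ i, Fact (d i).Prime] {m N M w : ℕ}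

lemma discrepancy_eq_of_subset {s t : Finset ℕ} {f : ℕ → ℝ} (hst : s ⊆ t)
    (hf : ∀ n ∈ t, n ∉ s → f n = 0) {q : ℕ} (a : ZMod q) :
    discrepancy t f a = discrepancy s f a := by
  simp only [discrepancy, residueSum, sum_filter]
  rw [sum_subset hst hf, sum_subset hst fun n hn hns => by rw [hf n hn hns, ite_self]]

lemma IsSparse.sum_sq_le (h : IsSparse I d w) : ∑ i ∈ I, (d i : ℝ) ^ 2 ≤ (w : ℝ) ^ 3 := by
  have hcard : #I ≤ w := by
    simpa using card_le_card_of_injOn (t := Ioc 0 w) d (fun i hi =>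
      mem_Ioc.2 ⟨(Fact.out : (d i).Prime).pos, h.le i hi⟩) h.injOn
  calc ∑ i ∈ I, (d i : ℝ) ^ 2 ≤ #I • (w : ℝ) ^ 2 :=
        sum_le_card_nsmul _ _ _ fun i hi => by gcongr; exact h.le i hi
    _ ≤ (w : ℝ) * (w : ℝ) ^ 2 := by rw [nsmul_eq_mul]; gcongr
    _ = (w : ℝ) ^ 3 := by ring

lemma IsSparse.not_dvd_of_roughIndicator_ne_zero (h : IsSparse I d (level m)) {i : ι} (hi : i ∈ I)
    {n : ℕ} (hn : roughIndicator (level (m + 7)) n ≠ 0) : ¬ d i ∣ n := fun hdn =>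
  ((h.le i hi).trans_lt (level_strictMono (by omega))).not_ge
    (roughIndicator_ne_zero_iff.1 hn _ Fact.out hdn)

lemma IsSparse.siftDensity_sdiff_le (h : IsSparse I d (level m)) :
    siftDensity ((level m).primesBelow \ I.image d) ≤ 7.39 / Real.log (level m) := by
  have hprime : ∀ p ∈ I.image d, p.Prime := by
    simp only [mem_image]
    rintro _ ⟨i, -, rfl⟩
    exact Fact.out
  have hexp : Real.exp (∑ p ∈ I.image d, 1 / ((p : ℝ) - 1)) ≤ 7.39 := by
    rw [sum_image h.injOn]
    have he := Real.exp_one_lt_d9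
    calc _ ≤ Real.exp (1 + 1) := Real.exp_le_exp.2 (h.sum_le.trans_eq (by norm_num))
      _ ≤ 2.7182818286 * 2.7182818286 := by rw [Real.exp_add]; gcongr
      _ ≤ 7.39 := by norm_num
  have hw := siftDensity_primesBelow_le (two_le_level m)
  calc _ ≤ siftDensity (level m).primesBelow * Real.exp (∑ p ∈ I.image d, 1 / ((p : ℝ) - 1)) :=
        _root_.siftDensity_sdiff_le (fun _ => Nat.prime_of_mem_primesBelow) hprime
    _ ≤ 1 / Real.log (level m) * 7.39 := by gcongr
    _ = _ := by ring

lemma IsSparse.exists_upper_sieve (h : IsSparse I d (level m)) (hN : level (m + 7) ≤ N) :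
    ∃ (ν : ℕ → ℝ) (Q : ℝ),
      HasDensity ((level m).primesBelow \ I.image d) ν Q ((level m : ℝ) ^ 58) ∧
      (∀ n, siftIndicator ((level m).primesBelow \ I.image d) n ≤ ν n) ∧
      N * Q + (level m : ℝ) ^ 58 * (level m : ℝ) ^ 3 ≤ 13 * N / Real.log (level m) := by
  have hP : ∀ p ∈ (level m).primesBelow \ I.image d, p < level m ∧ p.Prime := fun p hp =>
    Nat.mem_primesBelow.1 (mem_sdiff.1 hp).1
  obtain ⟨-, ν, -, Q, -, hν, -, hνP, -, hQ⟩ :=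
    hasSieve_of_lt m (le_refl 13) (fun p hp => (hP p hp).2) fun p hp => (hP p hp).1
  refine ⟨ν, Q, by simpa [level] using hν, hνP, ?_⟩
  have hL := log_level_pos m
  have hw : (1 : ℝ) ≤ level m := mod_cast one_le_two.trans (two_le_level m)
  have hQ' : Q ≤ 12 / Real.log (level m) := by
    calc Q ≤ (1 + 2 ^ 25 / 4 ^ 13) * (7.39 / Real.log (level m)) :=
          hQ.trans (by gcongr; exact h.siftDensity_sdiff_le)
      _ = (1 + 2 ^ 25 / 4 ^ 13) * 7.39 / Real.log (level m) := by ring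
      _ ≤ 12 / Real.log (level m) := by gcongr; norm_num
  have hE : (level m : ℝ) ^ 58 * (level m : ℝ) ^ 3 ≤ N / Real.log (level m) := by
    rw [le_div_iff₀ hL]
    calc (level m : ℝ) ^ 58 * (level m : ℝ) ^ 3 * Real.log (level m)
        ≤ (level m : ℝ) ^ 58 * (level m : ℝ) ^ 3 * level m := by
          gcongr; exact Real.log_le_self (Nat.cast_nonneg _)
      _ = (level m : ℝ) ^ 62 := by ring
      _ ≤ (level m : ℝ) ^ 2 ^ 7 := pow_le_pow_right₀ hw (by norm_num)
      _ ≤ N := by exact_mod_cast level_add m 7 ▸ hN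
  calc _ ≤ N * (12 / Real.log (level m)) + N / Real.log (level m) := by gcongr
    _ = _ := by ring

lemma siftIndicator_eq_one_of_roughIndicator_ne_zero {z n : ℕ} {S : Finset ℕ}
    (hS : ∀ p ∈ S, p.Prime ∧ p < z) (h : roughIndicator z n ≠ 0) : siftIndicator S n = 1 :=
  siftIndicator_eq_ite.trans <| if_pos fun p hp hpn =>
    (hS p hp).2.not_ge (roughIndicator_ne_zero_iff.1 h p (hS p hp).1 hpn)

lemma sum_sq_le_of_abs_le {s : Finset ℕ} {f ν : ℕ → ℝ} {B : ℝ} (hν : ∀ n ∈ s, 0 ≤ ν n)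
    (hfν : ∀ n ∈ s, f n ≠ 0 → 1 ≤ ν n) (hB : ∀ n ∈ s, |f n| ≤ B) :
    ∑ n ∈ s, f n ^ 2 ≤ B ^ 2 * ∑ n ∈ s, ν n := by
  rw [mul_sum]
  refine sum_le_sum fun n hn => ?_
  rcases eq_or_ne (f n) 0 with hfn | hfn
  · rw [hfn, zero_pow two_ne_zero]
    exact mul_nonneg (sq_nonneg B) (hν n hn)
  · exact (sq_le_sq' (abs_le.1 (hB n hn)).1 (abs_le.1 (hB n hn)).2).trans
      (le_mul_of_one_le_right (sq_nonneg B) (hfν n hn hfn))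

lemma IsSparse.sum_sq_discrepancy_le_of_level_le (h : IsSparse I d (level m)) {f : ℕ → ℝ} {B : ℝ}
    (hN : level (m + 7) ≤ N) (hB : ∀ n ∈ Ioc 0 N, |f n| ≤ B)
    (hf : ∀ n ∈ Ioc 0 N, f n ≠ 0 → roughIndicator (level (m + 7)) n ≠ 0) :
    ∑ i ∈ I, d i * ∑ a : ZMod (d i), discrepancy (Ioc 0 N) f a ^ 2 ≤
      (13 * B * N / Real.log (level m)) ^ 2 := by
  obtain ⟨ν, Q, hν, hPν, hQ⟩ := h.exists_upper_sieve hN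
  have hprime : ∀ i, (d i).Prime := fun i => Fact.out
  have hν0 : ∀ n, 0 ≤ ν n := fun n => siftIndicator_nonneg.trans (hPν n)
  have hfν : ∀ n ∈ Ioc 0 N, f n ≠ 0 → 1 ≤ ν n := fun n hn hfn =>
    (siftIndicator_eq_one_of_roughIndicator_ne_zero (fun p hp =>
      have hp := Nat.mem_primesBelow.1 (mem_sdiff.1 hp).1
      ⟨hp.2, hp.1.trans (level_strictMono (by omega))⟩) (hf n hn hfn)).symm.le.trans (hPν n)
  have hmain := hν.sum_sq_discrepancy_le (I := I) hν0
    (fun i hi p hp => (Nat.coprime_primes (hprime i) (Nat.prime_of_mem_primesBelow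
      (mem_sdiff.1 hp).1)).2 fun hip => (mem_sdiff.1 hp).2 (hip ▸ mem_image_of_mem d hi))
    (fun i hi j hj hij => (Nat.coprime_primes (hprime i) (hprime j)).2 (h.injOn.ne hi hj hij)) hfν
    fun i hi n hn hdn => by_contra fun hfn =>
      h.not_dvd_of_roughIndicator_ne_zero hi (hf n hn hfn) hdn
  have hw : (1 : ℝ) ≤ (level m : ℝ) ^ 3 :=
    one_le_pow₀ (mod_cast one_le_two.trans (two_le_level m))
  have hcount : ∑ n ∈ Ioc 0 N, ν n ≤ 13 * N / Real.log (level m) := by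
    have h1 := (abs_le.1 (hν 1 one_pos (by simp) 0 N 0 N.zero_le)).2
    have h2 := le_mul_of_one_le_right (pow_nonneg (level m).cast_nonneg 58) hw
    simp only [Nat.modEq_one, filter_true, Nat.cast_one, Nat.cast_zero, div_one, sub_zero] at h1
    linarith
  have hL := log_level_pos m
  calc _ ≤ (N * Q + (level m : ℝ) ^ 58 * ∑ i ∈ I, (d i : ℝ) ^ 2) * ∑ n ∈ Ioc 0 N, f n ^ 2 := hmain
    _ ≤ (13 * N / Real.log (level m)) * (B ^ 2 * (13 * N / Real.log (level m))) := by
      gcongr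
      · refine le_trans ?_ hQ
        gcongr
        exact h.sum_sq_le
      · refine (sum_sq_le_of_abs_le (fun n _ => hν0 n) hfν hB).trans ?_
        gcongr
    _ = _ := by ring

theorem IsSparse.sum_sq_discrepancy_le (h : IsSparse I d (level m)) {f : ℕ → ℝ} {y B : ℝ}
    (hf : ∀ n ∈ Ioc 0 M, f n ≠ 0 → 1 < n ∧ n ≤ y ∧ roughIndicator (level (m + 7)) n ≠ 0)
    (hB : ∀ n ∈ Ioc 0 M, |f n| ≤ B) :
    ∑ i ∈ I, d i * ∑ a : ZMod (d i), discrepancy (Ioc 0 M) f a ^ 2 ≤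
      (13 * B * y / Real.log (level m)) ^ 2 := by
  by_cases hf0 : ∀ n ∈ Ioc 0 M, f n = 0
  · have hd : ∀ i, ∀ a : ZMod (d i), discrepancy (Ioc 0 M) f a = 0 := fun i a =>
      (discrepancy_eq_of_subset (empty_subset _) (fun n hn _ => hf0 n hn) a).trans
        (by simp [discrepancy, residueSum])
    simp only [hd]
    simpa using sq_nonneg _
  push Not at hf0
  obtain ⟨n₀, hn₀, hfn₀⟩ := hf0
  obtain ⟨h1n₀, hn₀y, hn₀z⟩ := hf n₀ hn₀ hfn₀
  have hB0 : 0 ≤ B := (abs_nonneg _).trans (hB n₀ hn₀)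
  have hy : 0 ≤ y := n₀.cast_nonneg.trans hn₀y
  set N := min M ⌊y⌋₊
  have hNM : Ioc 0 N ⊆ Ioc 0 M := Ioc_subset_Ioc_right (min_le_left _ _)
  have hNy : (N : ℝ) ≤ y := (Nat.cast_le.2 (min_le_right _ _)).trans (Nat.floor_le hy)
  have hout : ∀ n ∈ Ioc 0 M, n ∉ Ioc 0 N → f n = 0 := fun n hn hnN => by_contra fun hfn =>
    hnN (mem_Ioc.2 ⟨(mem_Ioc.1 hn).1, le_min (mem_Ioc.1 hn).2 (Nat.le_floor (hf n hn hfn).2.1)⟩)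
  simp only [discrepancy_eq_of_subset hNM hout]
  have hL := (log_level_pos m).le
  refine (h.sum_sq_discrepancy_le_of_level_le ((le_of_roughIndicator_ne_zero h1n₀ hn₀z).trans
    (le_min (mem_Ioc.1 hn₀).2 (Nat.le_floor hn₀y))) (fun n hn => hB n (hNM hn))
    fun n hn hfn => (hf n (hNM hn) hfn).2.2).trans ?_
  have hBN : 0 ≤ 13 * B * (N : ℝ) := mul_nonneg (mul_nonneg (by norm_num) hB0) N.cast_nonneg
  exact pow_le_pow_left₀ (div_nonneg hBN hL) (div_le_div_of_nonneg_right (by gcongr) hL) 2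

end Sparse

/-- `f` restricted to the integers of the block `[c ^ u, c ^ (u + 1))`. -/
noncomputable def leftBlock (c : ℝ) (u : ℕ) (f : ℕ → ℝ) (i : ℕ) : ℝ :=
  if ⌊Real.logb c i⌋₊ = u then f i else 0

/-- `g` restricted to the integers whose product with the block `[c ^ u, c ^ (u + 1))` meets
the interval `(x, y]`. -/
noncomputable def rightBlock (c : ℝ) (u x y : ℕ) (g : ℕ → ℝ) (k : ℕ) : ℝ :=
  if x < c ^ (u + 1) * k ∧ c ^ u * k ≤ y then g k else 0

section Blocks
variable {c : ℝ} {f g φ : ℕ → ℝ} {i k u x y M U : ℕ}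

lemma pow_floor_logb_le (hc : 1 < c) (hi : i ≠ 0) : c ^ ⌊Real.logb c i⌋₊ ≤ i := by
  have hi1 : (1 : ℝ) ≤ i := mod_cast Nat.one_le_iff_ne_zero.2 hi
  rw [← Real.rpow_natCast, ← Real.le_logb_iff_rpow_le hc (by positivity)]
  exact Nat.floor_le (Real.logb_nonneg hc hi1)

lemma lt_pow_floor_logb_add_one (hc : 1 < c) (hi : i ≠ 0) : i < c ^ (⌊Real.logb c i⌋₊ + 1) := by
  rw [← Real.rpow_natCast, ← Real.logb_lt_iff_lt_rpow hc (by positivity)]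
  exact_mod_cast Nat.lt_floor_add_one _

lemma rightBlock_nonneg (hg : 0 ≤ g k) : 0 ≤ rightBlock c u x y g k := by
  rw [rightBlock]; split_ifs <;> simp [hg]

lemma abs_leftBlock_le : |leftBlock c u f i| ≤ |f i| := by
  rw [leftBlock]; split_ifs <;> simp

lemma abs_rightBlock_le : |rightBlock c u x y g k| ≤ |g k| := by
  rw [rightBlock]; split_ifs <;> simp

lemma le_pow_of_leftBlock_ne_zero (hc : 1 < c) (hi : i ≠ 0) (h : leftBlock c u f i ≠ 0) :
    f i ≠ 0 ∧ i ≤ c ^ (u + 1) := by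
  rw [leftBlock, ite_ne_right_iff] at h
  exact ⟨h.2, h.1 ▸ (lt_pow_floor_logb_add_one hc hi).le⟩

lemma le_div_of_rightBlock_ne_zero (hc : 0 < c) (h : rightBlock c u x y g k ≠ 0) :
    g k ≠ 0 ∧ k ≤ y / c ^ u := by
  rw [rightBlock, ite_ne_right_iff] at h
  exact ⟨h.2, (le_div_iff₀' (by positivity)).2 h.1.2⟩

lemma sum_Ioc_mul_sum_divisorsAntidiagonal (hy : y ≤ M) :
    ∑ n ∈ Ioc x y, φ n * ∑ q ∈ n.divisorsAntidiagonal, f q.1 * g q.2 =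
      ∑ i ∈ Ioc 0 M, ∑ k ∈ Ioc 0 M,
        if x < i * k ∧ i * k ≤ y then φ (i * k) * (f i * g k) else 0 := by
  have hanti : ∀ n ∈ Ioc x y, φ n * ∑ q ∈ n.divisorsAntidiagonal, f q.1 * g q.2 =
      ∑ i ∈ Ioc 0 M, ∑ k ∈ Ioc 0 M, if i * k = n then φ (i * k) * (f i * g k) else 0 :=
    fun n hn => by
      rw [mem_Ioc] at hn
      rw [Nat.divisorsAntidiagonal_eq_prod_filter_of_le (by omega) (hn.2.trans hy), mul_sum,
        sum_filter, sum_product]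
      refine sum_congr rfl fun i _ => sum_congr rfl fun k _ => ?_
      split_ifs with h <;> simp [h]
  rw [sum_congr rfl hanti, sum_comm]
  refine sum_congr rfl fun i _ => ?_
  rw [sum_comm]
  exact sum_congr rfl fun k _ => by simp

lemma sum_leftBlock_mul_rightBlock (hU : ∀ i ∈ Ioc 0 M, ⌊Real.logb c i⌋₊ < U) :
    ∑ u ∈ range U, ∑ i ∈ Ioc 0 M, ∑ k ∈ Ioc 0 M,
        φ (i * k) * (leftBlock c u f i * rightBlock c u x y g k) =
      ∑ i ∈ Ioc 0 M, ∑ k ∈ Ioc 0 M,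
        φ (i * k) * (f i * rightBlock c ⌊Real.logb c i⌋₊ x y g k) := by
  rw [sum_comm]
  refine sum_congr rfl fun i hi => ?_
  rw [sum_comm]
  refine sum_congr rfl fun k _ => ?_
  simp only [leftBlock, ite_mul, zero_mul, mul_ite, mul_zero]
  rw [sum_ite_eq, if_pos (mem_range.2 (hU i hi))]

lemma sum_convolution_le_sum_blocks (hc : 1 < c) (hf : ∀ n, 0 ≤ f n) (hg : ∀ n, 0 ≤ g n)
    (hφ : ∀ n, 0 ≤ φ n) (hy : y ≤ M) (hU : ∀ i ∈ Ioc 0 M, ⌊Real.logb c i⌋₊ < U) :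
    ∑ n ∈ Ioc x y, φ n * ∑ q ∈ n.divisorsAntidiagonal, f q.1 * g q.2 ≤
      ∑ u ∈ range U, ∑ i ∈ Ioc 0 M, ∑ k ∈ Ioc 0 M,
        φ (i * k) * (leftBlock c u f i * rightBlock c u x y g k) := by
  rw [sum_Ioc_mul_sum_divisorsAntidiagonal hy, sum_leftBlock_mul_rightBlock hU]
  refine sum_le_sum fun i hi => sum_le_sum fun k _ => ?_
  split_ifs with h
  · have hi0 : i ≠ 0 := (mem_Ioc.1 hi).1.ne'
    have hx : (x : ℝ) < c ^ (⌊Real.logb c i⌋₊ + 1) * k := by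
      calc (x : ℝ) < i * k := mod_cast h.1
        _ ≤ _ := by gcongr; exact (lt_pow_floor_logb_add_one hc hi0).le
    have hy : c ^ ⌊Real.logb c i⌋₊ * k ≤ y := by
      calc _ ≤ (i : ℝ) * k := by gcongr; exact pow_floor_logb_le hc hi0
        _ ≤ y := mod_cast h.2
    rw [rightBlock, if_pos ⟨hx, hy⟩]
  · exact mul_nonneg (hφ _) (mul_nonneg (hf i) (rightBlock_nonneg (hg k)))

lemma sum_blocks_le_sum_convolution (hc : 1 < c) (hf : ∀ n, 0 ≤ f n) (hg : ∀ n, 0 ≤ g n)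
    (hφ : ∀ n, 0 ≤ φ n) (hy : y * c ≤ M) (hU : ∀ i ∈ Ioc 0 M, ⌊Real.logb c i⌋₊ < U) :
    ∑ u ∈ range U, ∑ i ∈ Ioc 0 M, ∑ k ∈ Ioc 0 M,
        φ (i * k) * (leftBlock c u f i * rightBlock c u x y g k) ≤
      ∑ n ∈ Ioc ⌊x / c⌋₊ ⌊y * c⌋₊, φ n * ∑ q ∈ n.divisorsAntidiagonal, f q.1 * g q.2 := by
  have hc0 : 0 < c := one_pos.trans hc
  rw [sum_Ioc_mul_sum_divisorsAntidiagonal (Nat.floor_le_of_le hy),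
    sum_leftBlock_mul_rightBlock hU]
  refine sum_le_sum fun i hi => sum_le_sum fun k _ => ?_
  have hi0 : i ≠ 0 := (mem_Ioc.1 hi).1.ne'
  have hnonneg := mul_nonneg (hφ (i * k)) (mul_nonneg (hf i) (hg k))
  rw [rightBlock]
  split_ifs with h h' h'
  · rfl
  · refine absurd ⟨?_, ?_⟩ h'
    · rw [Nat.floor_lt (by positivity), div_lt_iff₀ hc0]
      calc (x : ℝ) < c ^ (⌊Real.logb c i⌋₊ + 1) * k := h.1
        _ = c ^ ⌊Real.logb c i⌋₊ * k * c := by ring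
        _ ≤ i * k * c := by gcongr; exact pow_floor_logb_le hc hi0
        _ = (i * k : ℕ) * c := by push_cast; ring
    · refine Nat.le_floor ?_
      calc ((i * k : ℕ) : ℝ) ≤ c ^ (⌊Real.logb c i⌋₊ + 1) * k := by
            push_cast; gcongr; exact (lt_pow_floor_logb_add_one hc hi0).le
        _ = c ^ ⌊Real.logb c i⌋₊ * k * c := by ring
        _ ≤ y * c := by gcongr; exact h.2
  · simpa using hnonneg
  · simp

end Blocks

/-- The von Mangoldt function on the `z`-rough integers. -/
noncomputable def roughVonMangoldt (z n : ℕ) : ℝ := roughIndicator z n * vonMangoldt n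

/-- The indicator function of the `z`-rough integers other than `1`. -/
noncomputable def properRoughIndicator (z n : ℕ) : ℝ := if n = 1 then 0 else roughIndicator z n

/-- The Dirichlet convolution of `roughVonMangoldt z` and `properRoughIndicator z`: the bilinear
part of `log` on the `z`-rough integers. -/
noncomputable def roughConvolution (z n : ℕ) : ℝ :=
  ∑ q ∈ n.divisorsAntidiagonal, roughVonMangoldt z q.1 * properRoughIndicator z q.2

section RoughConvolution
variable {z n : ℕ}

lemma roughVonMangoldt_nonneg : 0 ≤ roughVonMangoldt z n :=
  mul_nonneg roughIndicator_nonneg vonMangoldt_nonneg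

lemma properRoughIndicator_nonneg : 0 ≤ properRoughIndicator z n := by
  rw [properRoughIndicator]
  split_ifs
  exacts [le_rfl, roughIndicator_nonneg]

lemma roughVonMangoldt_le_log : roughVonMangoldt z n ≤ Real.log n :=
  (mul_le_of_le_one_left vonMangoldt_nonneg roughIndicator_le_one).trans vonMangoldt_le_log

lemma properRoughIndicator_le_one : properRoughIndicator z n ≤ 1 := by
  rw [properRoughIndicator]
  split_ifs
  exacts [zero_le_one, roughIndicator_le_one]

lemma roughIndicator_mul_log :
    roughIndicator z n * Real.log n = roughVonMangoldt z n + roughConvolution z n := by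
  have hsum : ∑ q ∈ n.divisorsAntidiagonal, vonMangoldt q.1 = Real.log n := by
    rw [Nat.sum_divisorsAntidiagonal fun i _ => vonMangoldt i, vonMangoldt_sum]
  have hone : ∑ q ∈ n.divisorsAntidiagonal, (if q.2 = 1 then roughVonMangoldt z n else 0) =
      roughVonMangoldt z n := by
    rw [Nat.sum_divisorsAntidiagonal' fun _ k => if k = 1 then roughVonMangoldt z n else 0]
    rcases eq_or_ne n 0 with rfl | hn <;> simp [roughVonMangoldt, *]
  rw [← hone, ← hsum, mul_sum, roughConvolution, ← sum_add_distrib]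
  refine sum_congr rfl fun q hq => ?_
  rw [← (Nat.mem_divisorsAntidiagonal.1 hq).1, roughIndicator_mul, roughVonMangoldt,
    properRoughIndicator]
  split_ifs with h
  · simp [h, roughVonMangoldt, ← roughIndicator_mul]
  · rw [roughVonMangoldt]; ring

lemma roughConvolution_le : roughConvolution z n ≤ roughIndicator z n * Real.log n := by
  rw [roughIndicator_mul_log]
  exact le_add_of_nonneg_left roughVonMangoldt_nonneg

lemma rough_of_roughVonMangoldt_ne_zero (hn : n ≠ 0) (h : roughVonMangoldt z n ≠ 0) :
    1 < n ∧ roughIndicator z n ≠ 0 := by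
  refine ⟨Nat.one_lt_iff_ne_zero_and_ne_one.2 ⟨hn, ?_⟩, left_ne_zero_of_mul h⟩
  rintro rfl
  simp [roughVonMangoldt] at h

lemma rough_of_properRoughIndicator_ne_zero (hn : n ≠ 0) (h : properRoughIndicator z n ≠ 0) :
    1 < n ∧ roughIndicator z n ≠ 0 := by
  rw [properRoughIndicator, ite_ne_left_iff] at h
  exact ⟨Nat.one_lt_iff_ne_zero_and_ne_one.2 ⟨hn, h.1⟩, h.2.symm⟩

end RoughConvolution

section Boxes
variable {ι : Type*} {I : Finset ι} {d : ι → ℕ} [∀ i, Fact (d i).Prime] {c : ℝ} {m x y M u : ℕ}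

lemma IsSparse.sum_abs_block_le (h : IsSparse I d (level m)) (hc : 1 < c) (hM : 0 < M) :
    ∑ i ∈ I, |((d i : ℝ) - 1) * ∑ k ∈ Ioc 0 M, ∑ l ∈ Ioc 0 M, (if (k * l : ZMod (d i)) = 1 then
          leftBlock c u (roughVonMangoldt (level (m + 7))) k *
            rightBlock c u x y (properRoughIndicator (level (m + 7))) l else 0) -
        (∑ k ∈ Ioc 0 M, leftBlock c u (roughVonMangoldt (level (m + 7))) k) *
          ∑ l ∈ Ioc 0 M, rightBlock c u x y (properRoughIndicator (level (m + 7))) l| ≤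
      169 * c * y * Real.log M / Real.log (level m) ^ 2 := by
  have hc0 : 0 < c := one_pos.trans hc
  have hleft : ∀ n ∈ Ioc 0 M, leftBlock c u (roughVonMangoldt (level (m + 7))) n ≠ 0 →
      1 < n ∧ n ≤ c ^ (u + 1) ∧ roughIndicator (level (m + 7)) n ≠ 0 := fun n hn hne => by
    have hn0 : n ≠ 0 := (mem_Ioc.1 hn).1.ne'
    obtain ⟨hf, hle⟩ := le_pow_of_leftBlock_ne_zero hc hn0 hne
    exact ⟨(rough_of_roughVonMangoldt_ne_zero hn0 hf).1, hle,
      (rough_of_roughVonMangoldt_ne_zero hn0 hf).2⟩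
  have hright : ∀ n ∈ Ioc 0 M, rightBlock c u x y (properRoughIndicator (level (m + 7))) n ≠ 0 →
      1 < n ∧ n ≤ y / c ^ u ∧ roughIndicator (level (m + 7)) n ≠ 0 := fun n hn hne => by
    have hn0 : n ≠ 0 := (mem_Ioc.1 hn).1.ne'
    obtain ⟨hg, hle⟩ := le_div_of_rightBlock_ne_zero hc0 hne
    exact ⟨(rough_of_properRoughIndicator_ne_zero hn0 hg).1, hle,
      (rough_of_properRoughIndicator_ne_zero hn0 hg).2⟩
  have hα := h.sum_sq_discrepancy_le hleft (B := Real.log M) fun n hn => by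
    have hn0 : 0 < n := (mem_Ioc.1 hn).1
    refine abs_leftBlock_le.trans ?_
    rw [abs_of_nonneg roughVonMangoldt_nonneg]
    exact roughVonMangoldt_le_log.trans
      (Real.log_le_log (mod_cast hn0) (mod_cast (mem_Ioc.1 hn).2))
  have hβ := h.sum_sq_discrepancy_le hright (B := 1) fun n _ => by
    refine abs_rightBlock_le.trans ?_
    rw [abs_of_nonneg properRoughIndicator_nonneg]
    exact properRoughIndicator_le_one
  have hbil := sq_sum_abs_bilinear_le (I := I) (d := d)
    (fun i hi n hn hdn => by_contra fun hne =>
      h.not_dvd_of_roughIndicator_ne_zero hi (hleft n hn hne).2.2 hdn)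
    (fun i hi n hn hdn => by_contra fun hne =>
      h.not_dvd_of_roughIndicator_ne_zero hi (hright n hn hne).2.2 hdn)
  have : 0 ≤ Real.log M := Real.log_nonneg (mod_cast hM)
  have hℓ := log_level_pos m
  refine abs_le_of_sq_le_sq'
    ((hbil.trans (mul_le_mul hα hβ (by positivity) (by positivity))).trans_eq ?_)
    (by positivity) |>.2
  field_simp
  ring

lemma floor_logb_lt (hc : 1 < c) {i : ℕ} (hi : i ∈ Ioc 0 M) :
    ⌊Real.logb c i⌋₊ < ⌊Real.logb c M⌋₊ + 1 :=
  have hi := mem_Ioc.1 hi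
  Nat.lt_succ_of_le <| Nat.floor_mono <|
    Real.logb_le_logb_of_le hc (mod_cast hi.1) (mod_cast hi.2)

lemma sum_roughConvolution_modEq_one_le (z q : ℕ) (hc : 1 < c) (hy : y ≤ M) :
    ∑ n ∈ Ioc x y with n ≡ 1 [MOD q], roughConvolution z n ≤
      ∑ u ∈ range (⌊Real.logb c M⌋₊ + 1), ∑ k ∈ Ioc 0 M, ∑ l ∈ Ioc 0 M,
        if (k * l : ZMod q) = 1 then
          leftBlock c u (roughVonMangoldt z) k * rightBlock c u x y (properRoughIndicator z) l
        else 0 := by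
  have h := sum_convolution_le_sum_blocks (φ := fun n => if (n : ZMod q) = 1 then 1 else 0)
    (x := x) hc (fun n => roughVonMangoldt_nonneg (z := z) (n := n))
    (fun n => properRoughIndicator_nonneg (z := z) (n := n))
    (fun n => by split_ifs <;> norm_num) hy fun i => floor_logb_lt hc
  simp only [ite_mul, one_mul, zero_mul, Nat.cast_mul] at h
  rw [sum_filter]
  simpa only [roughConvolution, ← ZMod.natCast_eq_natCast_iff, Nat.cast_one] using h

lemma sum_sum_mul_sum_le_sum_roughConvolution (z : ℕ) (hc : 1 < c) (hM : y * c ≤ M) :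
    ∑ u ∈ range (⌊Real.logb c M⌋₊ + 1),
        (∑ k ∈ Ioc 0 M, leftBlock c u (roughVonMangoldt z) k) *
          ∑ l ∈ Ioc 0 M, rightBlock c u x y (properRoughIndicator z) l ≤
      ∑ n ∈ Ioc ⌊x / c⌋₊ ⌊y * c⌋₊, roughConvolution z n := by
  have h := sum_blocks_le_sum_convolution (φ := fun _ => 1) (x := x) hc
    (fun n => roughVonMangoldt_nonneg (z := z) (n := n))
    (fun n => properRoughIndicator_nonneg (z := z) (n := n))
    (fun _ => zero_le_one) hM fun i => floor_logb_lt hc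
  simpa only [one_mul, ← sum_mul_sum, roughConvolution] using h

theorem IsSparse.sum_mul_sum_roughConvolution_le (h : IsSparse I d (level m)) (hc : 1 < c)
    (hM : y * c ≤ M) (hM0 : 0 < M) :
    ∑ i ∈ I, ((d i : ℝ) - 1) * ∑ n ∈ Ioc x y with n ≡ 1 [MOD d i],
        roughConvolution (level (m + 7)) n ≤
      #I * ∑ n ∈ Ioc ⌊x / c⌋₊ ⌊y * c⌋₊, roughConvolution (level (m + 7)) n +
        (⌊Real.logb c M⌋₊ + 1) * (169 * c * y * Real.log M / Real.log (level m) ^ 2) := by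
  have hyM : y ≤ M := by
    have : (y : ℝ) ≤ M := (le_mul_of_one_le_right y.cast_nonneg hc.le).trans hM
    exact_mod_cast this
  set α : ℕ → ℕ → ℝ := fun u => leftBlock c u (roughVonMangoldt (level (m + 7)))
  set β : ℕ → ℕ → ℝ := fun u => rightBlock c u x y (properRoughIndicator (level (m + 7)))
  set T : ℕ → ℝ := fun u => (∑ k ∈ Ioc 0 M, α u k) * ∑ l ∈ Ioc 0 M, β u l
  set P : ι → ℕ → ℝ := fun i u => ∑ k ∈ Ioc 0 M, ∑ l ∈ Ioc 0 M,
    if (k * l : ZMod (d i)) = 1 then α u k * β u l else 0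
  set U := ⌊Real.logb c M⌋₊ + 1 with hU
  have hclass : ∀ i ∈ I, ((d i : ℝ) - 1) * ∑ n ∈ Ioc x y with n ≡ 1 [MOD d i],
      roughConvolution (level (m + 7)) n ≤
        ∑ u ∈ range U, T u + ∑ u ∈ range U, |((d i : ℝ) - 1) * P i u - T u| := fun i _ => by
    calc _ ≤ ((d i : ℝ) - 1) * ∑ u ∈ range U, P i u := by
          gcongr
          · exact (cast_prime_sub_one_pos _).le
          · exact sum_roughConvolution_modEq_one_le _ _ hc hyM
      _ ≤ ∑ u ∈ range U, (T u + |((d i : ℝ) - 1) * P i u - T u|) := by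
          rw [mul_sum]
          exact sum_le_sum fun u _ => by linarith [le_abs_self (((d i : ℝ) - 1) * P i u - T u)]
      _ = _ := sum_add_distrib
  calc _ ≤ #I * ∑ u ∈ range U, T u +
        ∑ u ∈ range U, ∑ i ∈ I, |((d i : ℝ) - 1) * P i u - T u| := by
        refine (sum_le_sum hclass).trans_eq ?_
        rw [sum_add_distrib, sum_const, nsmul_eq_mul, sum_comm]
    _ ≤ _ := by
        gcongr
        · exact sum_sum_mul_sum_le_sum_roughConvolution _ hc hM
        · refine (sum_le_card_nsmul _ _ _ fun u _ => h.sum_abs_block_le hc hM0).trans_eq ?_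
          rw [card_range, nsmul_eq_mul, hU]
          push_cast
          rfl

end Boxes

section Chebyshev
variable {x z : ℕ}

lemma two_mul_sqrt_mul_log_le {A y : ℝ} (hA : 0 < A) (hy : A ^ 4 ≤ y) :
    2 * √y * Real.log y ≤ 8 * y / A := by
  have hy0 : 0 ≤ y := (by positivity : 0 ≤ A ^ 4).trans hy
  obtain ⟨s, hs, rfl⟩ : ∃ s, 0 ≤ s ∧ y = s ^ 4 :=
    ⟨√√y, Real.sqrt_nonneg _, by
      rw [show 4 = 2 * 2 from rfl, pow_mul, Real.sq_sqrt (Real.sqrt_nonneg y), Real.sq_sqrt hy0]⟩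
  have hAs : A ≤ s := le_of_pow_le_pow_left₀ four_ne_zero hs hy
  have hsqrt : √(s ^ 4) = s ^ 2 := by
    rw [show s ^ 4 = (s ^ 2) ^ 2 by ring, Real.sqrt_sq (sq_nonneg s)]
  have hlog : Real.log (s ^ 4) ≤ 4 * s := by
    rw [Real.log_pow]
    have := Real.log_le_self hs
    push_cast
    linarith
  rw [hsqrt, le_div_iff₀ hA]
  calc 2 * s ^ 2 * Real.log (s ^ 4) * A ≤ 2 * s ^ 2 * (4 * s) * s := by gcongr
    _ = 8 * s ^ 4 := by ring

lemma le_theta_sub_theta (hx : 10 ^ 12 ≤ x) :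
    (x : ℝ) ≤ Chebyshev.theta (4 * x : ℕ) - Chebyshev.theta x := by
  have hxr : (10 ^ 12 : ℝ) ≤ x := mod_cast hx
  have hlower := Chebyshev.theta_ge (4 * x)
  have hupper := Chebyshev.theta_le_log4_mul_x (x := x) x.cast_nonneg
  have hsqrt := two_mul_sqrt_mul_log_le (A := 1000) (y := (4 * x : ℕ)) (by norm_num)
    (by push_cast; linarith)
  have hlog : Real.log ((4 * x : ℕ) + 1) ≤ x / 100 := by
    have hsq : √((4 * x : ℕ) + 1 : ℝ) ≤ x / 200 :=
      Real.sqrt_le_iff.2 ⟨by positivity, by push_cast; nlinarith⟩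
    have := Real.log_le_self (Real.sqrt_nonneg ((4 * x : ℕ) + 1 : ℝ))
    rw [Real.log_sqrt (by positivity)] at this
    linarith
  have hfour : Real.log 4 = 2 * Real.log 2 := by
    rw [show (4 : ℝ) = 2 ^ 2 by norm_num, Real.log_pow]
    norm_num
  rw [hfour] at hupper
  push_cast at *
  nlinarith [Real.log_two_gt_d9]

lemma le_sum_roughVonMangoldt (hx : 10 ^ 12 ≤ x) (hz : z ≤ x) :
    (x : ℝ) ≤ ∑ n ∈ Ioc x (4 * x), roughVonMangoldt z n := by
  calc (x : ℝ) ≤ Chebyshev.theta (4 * x : ℕ) - Chebyshev.theta x := le_theta_sub_theta hx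
    _ = ∑ p ∈ Ioc x (4 * x) with p.Prime, Real.log p := by
        rw [Chebyshev.theta, Chebyshev.theta, Nat.floor_natCast, Nat.floor_natCast,
          ← Ioc_union_Ioc_eq_Ioc x.zero_le (show x ≤ 4 * x by omega), filter_union,
          sum_union (disjoint_filter_filter (Ioc_disjoint_Ioc_of_le le_rfl)), add_sub_cancel_left]
    _ = ∑ p ∈ Ioc x (4 * x) with p.Prime, roughVonMangoldt z p := sum_congr rfl fun p hp => by
        obtain ⟨hpx, hp⟩ := mem_filter.1 hp
        rw [roughVonMangoldt, roughIndicator_eq_one_of_prime hp (hz.trans (mem_Ioc.1 hpx).1.le),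
          one_mul, vonMangoldt_apply_prime hp]
    _ ≤ _ := sum_le_sum_of_subset_of_nonneg (filter_subset _ _) fun _ _ _ =>
        roughVonMangoldt_nonneg

lemma sum_roughVonMangoldt_modEq_one_le {d : ℕ} (hx : 0 < x)
    (hno : ∀ p ∈ Ioc x (4 * x), p ≡ 1 [MOD d] → ¬ p.Prime) :
    ∑ n ∈ Ioc x (4 * x) with n ≡ 1 [MOD d], roughVonMangoldt z n ≤
      2 * √(4 * x) * Real.log (4 * x) := by
  have hx1 : (1 : ℝ) ≤ x := mod_cast hx
  calc _ ≤ ∑ n ∈ Ioc x (4 * x) with n ≡ 1 [MOD d], vonMangoldt n :=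
        sum_le_sum fun n _ => mul_le_of_le_one_left vonMangoldt_nonneg roughIndicator_le_one
    _ ≤ ∑ n ∈ Ioc 0 (4 * x) with ¬ n.Prime, vonMangoldt n := by
        refine sum_le_sum_of_subset_of_nonneg (fun n hn => ?_) fun _ _ _ => vonMangoldt_nonneg
        obtain ⟨hnx, hn⟩ := mem_filter.1 hn
        exact mem_filter.2 ⟨Ioc_subset_Ioc_left x.zero_le hnx, hno n hnx hn⟩
    _ = Chebyshev.psi (4 * x : ℕ) - Chebyshev.theta (4 * x : ℕ) := by
        rw [Chebyshev.psi_sub_theta_eq_sum_not_prime, Nat.floor_natCast]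
    _ ≤ _ := by
        push_cast
        exact Chebyshev.psi_sub_theta_le (by linarith)

end Chebyshev

section Core
variable {ι : Type*} {I : Finset ι} {d : ι → ℕ} [∀ i, Fact (d i).Prime] {m x : ℕ} {τ E : ℝ}

lemma HasSieve.sum_roughConvolution_le {z a b c e : ℕ} (h : HasSieve z.primesBelow τ E)
    (hab : a ≤ b) (hbc : b ≤ c) (hce : c ≤ e) :
    ∑ n ∈ Ioc a e, roughConvolution z n ≤ ∑ n ∈ Ioc b c, roughConvolution z n +
      Real.log e * (((b - a) + (e - c) : ℝ) * ((1 + τ) * siftDensity z.primesBelow) + 2 * E) := by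
  have hpart : ∀ {s t : ℕ}, s ≤ t → t ≤ e → ∑ n ∈ Ioc s t, roughConvolution z n ≤
      Real.log e * (((t : ℝ) - s) * ((1 + τ) * siftDensity z.primesBelow) + E) := fun hst hte => by
    refine le_trans ?_ (mul_le_mul_of_nonneg_left (h.sum_siftIndicator_le hst)
      (Real.log_natCast_nonneg e))
    rw [mul_sum]
    refine sum_le_sum fun n hn => roughConvolution_le.trans ?_
    rw [mul_comm]
    exact mul_le_mul_of_nonneg_right (Real.log_le_log (mod_cast (mem_Ioc.1 hn).1.pos)
      (mod_cast (mem_Ioc.1 hn).2.trans hte)) siftIndicator_nonneg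
  have hleft := hpart hab (hbc.trans hce)
  have hright := hpart hce le_rfl
  rw [← Ioc_union_Ioc_eq_Ioc hab (hbc.trans hce), ← Ioc_union_Ioc_eq_Ioc hbc hce,
    sum_union (by simp [disjoint_union_right, Ioc_disjoint_Ioc_of_le, hbc]),
    sum_union (Ioc_disjoint_Ioc_of_le le_rfl)]
  linarith

lemma HasSieve.sum_roughIndicator_mul_log_le {z q w : ℕ} (h : HasSieve z.primesBelow τ E)
    (h' : HasSieve (z.primesBelow.erase q) τ E) (hq : q.Prime) (hqz : q < z) (hqw : q ≤ w)
    (hx : 0 < x) (hno : ∀ p ∈ Ioc x (4 * x), p ≡ 1 [MOD q] → ¬ p.Prime) :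
    ∑ n ∈ Ioc x (4 * x), roughIndicator z n * Real.log n ≤
      (q - 1) * ∑ n ∈ Ioc x (4 * x) with n ≡ 1 [MOD q], roughConvolution z n +
        (w * (2 * √(4 * x) * Real.log (4 * x)) +
          Real.log 4 * ∑ n ∈ Ioc x (4 * x), roughIndicator z n +
          Real.log x * (6 * x * (τ * siftDensity z.primesBelow) + w * E)) := by
  have hE : 0 ≤ E := by obtain ⟨f, g, δ, ε, hf, -⟩ := h; exact hf.error_nonneg
  have hx1 : (1 : ℝ) ≤ x := mod_cast hx
  have hprime : ((q : ℝ) - 1) * ∑ n ∈ Ioc x (4 * x) with n ≡ 1 [MOD q], roughVonMangoldt z n ≤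
      w * (2 * √(4 * x) * Real.log (4 * x)) :=
    mul_le_mul (by linarith [(mod_cast hqw : (q : ℝ) ≤ w)])
      (sum_roughVonMangoldt_modEq_one_le hx hno) (sum_nonneg fun _ _ => roughVonMangoldt_nonneg)
      w.cast_nonneg
  have herror : Real.log x * (2 * (3 * x * (τ * siftDensity z.primesBelow)) + q * E) ≤
      Real.log x * (6 * x * (τ * siftDensity z.primesBelow) + w * E) := by
    refine mul_le_mul_of_nonneg_left ?_ (Real.log_nonneg hx1)
    linarith [mul_le_mul_of_nonneg_right (mod_cast hqw : (q : ℝ) ≤ w) hE]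
  have hmain := h.sum_mul_log_le h' (fun p hp => Nat.prime_of_mem_primesBelow hp)
    (Nat.mem_primesBelow.2 ⟨hqz, hq⟩) hx
  change ∑ n ∈ Ioc x (4 * x), roughIndicator z n * Real.log n ≤
    (q - 1) * ∑ n ∈ Ioc x (4 * x) with n ≡ 1 [MOD q], roughIndicator z n * Real.log n +
      Real.log 4 * ∑ n ∈ Ioc x (4 * x), roughIndicator z n + _ at hmain
  rw [sum_congr rfl fun n (_ : n ∈ (Ioc x (4 * x)).filter (· ≡ 1 [MOD q])) =>
    roughIndicator_mul_log, sum_add_distrib, mul_add] at hmain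
  linarith

lemma HasSieve.sum_roughConvolution_floor_le {z : ℕ} {c : ℝ} (h : HasSieve z.primesBelow τ E)
    (hτ : 0 ≤ τ) (hx : 0 < x) (hc : 1 ≤ c) (hc2 : c ≤ 2) :
    ∑ n ∈ Ioc ⌊x / c⌋₊ ⌊(4 * x : ℕ) * c⌋₊, roughConvolution z n ≤
      ∑ n ∈ Ioc x (4 * x), roughConvolution z n + Real.log (8 * x) *
        ((5 * (c - 1) * x + 1) * ((1 + τ) * siftDensity z.primesBelow) + 2 * E) := by
  have hc0 : 0 < c := one_pos.trans_le hc
  have hx1 : (1 : ℝ) ≤ x := mod_cast hx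
  have hE : 0 ≤ E := by obtain ⟨f, g, δ, ε, hf, -⟩ := h; exact hf.error_nonneg
  have hδ := siftDensity_pos fun p (hp : p ∈ z.primesBelow) => Nat.prime_of_mem_primesBelow hp
  have hx' : ⌊x / c⌋₊ ≤ x := Nat.floor_le_of_le (div_le_self x.cast_nonneg hc)
  have hy' : 4 * x ≤ ⌊(4 * x : ℕ) * c⌋₊ :=
    Nat.le_floor (le_mul_of_one_le_right (Nat.cast_nonneg _) hc)
  have hy : (⌊(4 * x : ℕ) * c⌋₊ : ℝ) ≤ 4 * x * c := by
    simpa using Nat.floor_le (by positivity : 0 ≤ (4 * x : ℕ) * c)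
  have hleft : (x : ℝ) - ⌊x / c⌋₊ ≤ (c - 1) * x + 1 := by
    have hdiv : (x : ℝ) - x / c ≤ (c - 1) * x := by
      rw [sub_le_iff_le_add, ← sub_le_iff_le_add', le_div_iff₀ hc0]
      nlinarith [sq_nonneg (c - 1)]
    linarith [Nat.lt_floor_add_one (x / c)]
  have hwidth : (x - ⌊x / c⌋₊ + (⌊(4 * x : ℕ) * c⌋₊ - (4 * x : ℕ)) : ℝ) ≤
      5 * (c - 1) * x + 1 := by
    push_cast at hy ⊢
    linarith
  have hlog : Real.log ⌊(4 * x : ℕ) * c⌋₊ ≤ Real.log (8 * x) :=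
    Real.log_le_log (by norm_cast; omega) (hy.trans (by nlinarith))
  have hlog0 : 0 ≤ Real.log (8 * x) := Real.log_nonneg (by linarith)
  have hwidth0 : (0 : ℝ) ≤ x - ⌊x / c⌋₊ + (⌊(4 * x : ℕ) * c⌋₊ - (4 * x : ℕ)) :=
    add_nonneg (sub_nonneg.2 (mod_cast hx')) (sub_nonneg.2 (mod_cast hy'))
  have : 0 ≤ 5 * (c - 1) * x + 1 := hwidth0.trans hwidth
  refine (h.sum_roughConvolution_le hx' (show x ≤ 4 * x by omega) hy').trans ?_
  gcongr

theorem IsSparse.card_mul_sum_roughVonMangoldt_le {c : ℝ} (h : IsSparse I d (level m))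
    (hsieve : ∀ S ⊆ (level (m + 7)).primesBelow, HasSieve S τ E)
    (hno : ∀ i ∈ I, ∀ p ∈ Ioc x (4 * x), p ≡ 1 [MOD d i] → ¬ p.Prime)
    (hτ : 0 ≤ τ) (hx : 0 < x) (hc : 1 < c) (hc2 : c ≤ 2) :
    #I * ∑ n ∈ Ioc x (4 * x), roughVonMangoldt (level (m + 7)) n ≤
      #I * (level m * (2 * √(4 * x) * Real.log (4 * x)) +
          Real.log 4 * ∑ n ∈ Ioc x (4 * x), roughIndicator (level (m + 7)) n +
          Real.log x * (6 * x * (τ * siftDensity (level (m + 7)).primesBelow) + level m * E) +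
          Real.log (8 * x) * ((5 * (c - 1) * x + 1) *
            ((1 + τ) * siftDensity (level (m + 7)).primesBelow) + 2 * E)) +
        (⌊Real.logb c (8 * x)⌋₊ + 1) *
          (676 * c * x * Real.log (8 * x) / Real.log (level m) ^ 2) := by
  have hclass := sum_le_sum fun i (hi : i ∈ I) =>
    (hsieve _ subset_rfl).sum_roughIndicator_mul_log_le (hsieve _ (erase_subset (d i) _)) Fact.out
      ((h.le i hi).trans_lt (level_strictMono (by omega))) (h.le i hi) hx (hno i hi)
  have hboxes := h.sum_mul_sum_roughConvolution_le (x := x) (y := 4 * x) (M := 8 * x) hc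
    (by push_cast; nlinarith [(x.cast_nonneg : (0 : ℝ) ≤ x)]) (by omega)
  have henlarge := mul_le_mul_of_nonneg_left
    ((hsieve _ subset_rfl).sum_roughConvolution_floor_le hτ hx hc.le hc2)
    (Nat.cast_nonneg #I : (0 : ℝ) ≤ #I)
  simp only [roughIndicator_mul_log, sum_add_distrib, sum_const, nsmul_eq_mul] at hclass
  push_cast at hboxes henlarge
  rw [show 169 * c * (4 * x) = 676 * c * x by ring] at hboxes
  linarith

end Core

section Existence
variable {m x : ℕ}

lemma two_pow_le_level_add_seven (m : ℕ) : 2 ^ 128 ≤ level (m + 7) :=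
  level_strictMono.monotone (Nat.le_add_left 7 m)

lemma two_pow_mul_level_le (m : ℕ) : 2 ^ 127 * level m ≤ level (m + 7) :=
  calc 2 ^ 127 * level m ≤ level m ^ 127 * level m := by gcongr; exact two_le_level m
    _ = level (m + 7) := by rw [level_add, ← pow_succ]; norm_num

lemma log_level_add_seven (m : ℕ) :
    Real.log (level (m + 7)) = 128 * Real.log (level m) := by
  rw [log_level, log_level, pow_add]
  ring

lemma half_le_log_level (m : ℕ) : 1 / 2 ≤ Real.log (level m) := by
  rw [log_level]
  nlinarith [Real.log_two_gt_d9, one_le_pow₀ (M₀ := ℝ) one_le_two (n := m)]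

lemma log_eight_mul_le_mul_log_level (hx : 0 < x) (hx' : x < level (m + 7) ^ 178) :
    Real.log (8 * x) ≤ 179 * Real.log (level (m + 7)) := by
  have h8 : 8 ≤ level (m + 7) := (by norm_num : 8 ≤ 2 ^ 128).trans (two_pow_le_level_add_seven m)
  have hx0 : (0 : ℝ) < x := mod_cast hx
  calc Real.log (8 * x) ≤ Real.log ((level (m + 7) : ℝ) ^ 179) := by
        refine Real.log_le_log (by positivity) ?_
        rw [pow_succ']
        exact mul_le_mul (mod_cast h8) (mod_cast hx'.le) hx0.le (Nat.cast_nonneg _)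
    _ = 179 * Real.log (level (m + 7)) := by rw [Real.log_pow]; norm_num

lemma floor_logb_add_one_mul_le {c ℓ M X : ℝ} (hc : c = 1 + 1 / 10 ^ 4) (hℓ : 1 / 2 ≤ ℓ)
    (hM : 1 ≤ M) (hMℓ : Real.log M ≤ 22912 * ℓ) (hX : 0 ≤ X) :
    (⌊Real.logb c M⌋₊ + 1) * (676 * c * X * Real.log M / ℓ ^ 2) ≤ 10 ^ 16 * X := by
  have hℓ0 : 0 < ℓ := one_half_pos.trans_le hℓ
  have hM0 : 0 ≤ Real.log M := Real.log_nonneg hM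
  have hlogc : 1 / 10001 ≤ Real.log c := by
    have := Real.one_sub_inv_le_log_of_pos (x := c) (by rw [hc]; norm_num)
    rw [hc] at this ⊢
    norm_num at this ⊢
    linarith
  have hfloor : (⌊Real.logb c M⌋₊ : ℝ) + 1 ≤ 230000000 * ℓ := by
    have hle : Real.logb c M ≤ 10001 * Real.log M := by
      rw [Real.logb, div_le_iff₀ (by linarith)]
      nlinarith
    have := Nat.floor_le (Real.logb_nonneg (by rw [hc]; norm_num) hM : 0 ≤ Real.logb c M)
    linarith
  calc _ ≤ 230000000 * ℓ * (676 * c * X * (22912 * ℓ) / ℓ ^ 2) := by gcongr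
    _ = 230000000 * 676 * 22912 * c * X := by field_simp
    _ ≤ 10 ^ 16 * X := by
      refine mul_le_mul_of_nonneg_right ?_ hX
      rw [hc]
      norm_num

lemma error_terms_le {w z X F L : ℝ} (hz : 2 ^ 128 ≤ z) (hw0 : 0 ≤ w) (hw : 2 ^ 127 * w ≤ z)
    (hF : 1 ≤ F) (hX : z ^ 3 * F ≤ X) (hLz : L ≤ 179 * Real.log z) :
    F ≤ X / 10 ^ 6 ∧ L * F ≤ X / 10 ^ 6 ∧ L * (w * F) ≤ X / 10 ^ 6 := by
  have hz0 : 0 < z := lt_of_lt_of_le (by norm_num) hz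
  have hzz : z ^ 2 * F * 2 ^ 128 ≤ X :=
    calc z ^ 2 * F * 2 ^ 128 ≤ z ^ 2 * F * z := by gcongr
      _ = z ^ 3 * F := by ring
      _ ≤ X := hX
  have hL : L ≤ 179 * z := hLz.trans (by gcongr; exact Real.log_le_self hz0.le)
  have hzF : z * F ≤ z ^ 2 * F := by
    gcongr
    exact le_self_pow₀ (by linarith) two_ne_zero
  have hFz : F ≤ z * F := le_mul_of_one_le_left (by linarith) (by linarith)
  refine ⟨by linarith, ?_, ?_⟩
  · have := mul_le_mul_of_nonneg_right hL (by linarith : 0 ≤ F)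
    linarith
  · have := mul_le_mul hL (mul_le_mul_of_nonneg_right hw (by linarith : 0 ≤ F))
      (by positivity) (by positivity)
    linarith

lemma prime_power_error_le {w z X : ℝ} (hz : 0 < z) (hw0 : 0 ≤ w) (hw : 2 ^ 127 * w ≤ z)
    (hX : z ^ 4 ≤ X) : w * (2 * √(4 * X) * Real.log (4 * X)) ≤ X / 10 ^ 6 := by
  have hX0 : 0 ≤ X := (by positivity : 0 ≤ z ^ 4).trans hX
  calc _ ≤ w * (8 * (4 * X) / z) := by
        gcongr
        exact two_mul_sqrt_mul_log_le hz (by linarith)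
    _ = 32 * X * w / z := by ring
    _ ≤ X / 10 ^ 6 := by
        rw [div_le_div_iff₀ hz (by norm_num)]
        nlinarith

lemma log_four_mul_le {ρ δ τ X F : ℝ} (hτ : τ = 1 / 2 ^ 15) (hX : 0 ≤ X) (hδ : δ ≤ 1 / 88)
    (hF : F ≤ X / 10 ^ 6) (hρ : ρ ≤ 3 * X * ((1 + τ) * δ) + F) : Real.log 4 * ρ ≤ X / 10 := by
  have hlog : Real.log 4 ≤ 1.4 := by
    rw [show (4 : ℝ) = 2 ^ 2 by norm_num, Real.log_pow]
    norm_num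
    linarith [Real.log_two_lt_d9]
  have : 0 ≤ τ := by rw [hτ]; positivity
  calc Real.log 4 * ρ ≤ Real.log 4 * (3 * X * ((1 + τ) * (1 / 88)) + X / 10 ^ 6) :=
        mul_le_mul_of_nonneg_left (hρ.trans (by gcongr)) (Real.log_nonneg (by norm_num))
    _ ≤ 1.4 * (3 * X * ((1 + τ) * (1 / 88)) + X / 10 ^ 6) := by gcongr
    _ ≤ X / 10 := by rw [hτ]; linarith

lemma class_error_le {w z X δ ρ F L τ : ℝ} (hτ : τ = 1 / 2 ^ 15) (hz : 2 ^ 128 ≤ z)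
    (hw0 : 0 ≤ w) (hw : 2 ^ 127 * w ≤ z) (hF : z ≤ F) (hX : z ^ 3 * F ≤ X)
    (hLX : Real.log (4 * X) ≤ L) (hLz : L ≤ 179 * Real.log z)
    (hδ0 : 0 ≤ δ) (hδ : δ ≤ 1 / Real.log z) (hρ : ρ ≤ 3 * X * ((1 + τ) * δ) + F) :
    w * (2 * √(4 * X) * Real.log (4 * X)) + Real.log 4 * ρ +
      Real.log X * (6 * X * (τ * δ) + w * F) +
      L * ((5 * (1 / 10 ^ 4) * X + 1) * ((1 + τ) * δ) + 2 * F) ≤ X / 2 := by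
  obtain ⟨hFX, hLF, hLwF⟩ := error_terms_le hz hw0 hw (by linarith) hX hLz
  have hz0 : 0 < z := lt_of_lt_of_le (by norm_num) hz
  have hF0 : 0 ≤ F := hz0.le.trans hF
  have hX0 : 2 ^ 128 ≤ X := by linarith
  have : 0 ≤ τ := by rw [hτ]; positivity
  have hlogz : 88 ≤ Real.log z := by
    have := Real.log_le_log (by norm_num) hz
    rw [Real.log_pow] at this
    norm_num at this
    linarith [Real.log_two_gt_d9]
  have hLδ : L * δ ≤ 179 :=
    calc L * δ ≤ 179 * Real.log z * (1 / Real.log z) := by gcongr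
      _ = 179 := by field_simp
  have hpowers := prime_power_error_le hz0 hw0 hw (X := X)
    (by nlinarith [mul_le_mul_of_nonneg_left hF (pow_nonneg hz0.le 3)])
  have hscale := log_four_mul_le hτ (by linarith) (hδ.trans (by gcongr)) hFX hρ
  have hsieve : Real.log X * (6 * X * (τ * δ) + w * F) ≤ X / 10 :=
    calc _ ≤ L * (6 * X * (τ * δ) + w * F) := by
          have : Real.log X ≤ L := (Real.log_le_log (by linarith) (by linarith)).trans hLX
          gcongr
      _ = 6 * τ * X * (L * δ) + L * (w * F) := by ring
      _ ≤ 6 * τ * X * 179 + X / 10 ^ 6 := by gcongr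
      _ ≤ X / 10 := by rw [hτ]; linarith
  have hedges : L * ((5 * (1 / 10 ^ 4) * X + 1) * ((1 + τ) * δ) + 2 * F) ≤ X / 10 :=
    calc _ = (5 * (1 / 10 ^ 4) * X + 1) * (1 + τ) * (L * δ) + 2 * (L * F) := by ring
      _ ≤ (5 * (1 / 10 ^ 4) * X + 1) * (1 + τ) * 179 + 2 * (X / 10 ^ 6) := by gcongr
      _ ≤ X / 10 := by rw [hτ]; linarith
  linarith

lemma hasSieve_primesBelow_level {S : Finset ℕ} (hS : S ⊆ (level m).primesBelow) :
    HasSieve S (1 / 2 ^ 15) (level m ^ 86 : ℝ) := by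
  have := hasSieve_of_lt m (b := 20) (by norm_num)
    (fun p hp => Nat.prime_of_mem_primesBelow (hS hp)) fun p hp => Nat.lt_of_mem_primesBelow (hS hp)
  convert this using 1 <;> norm_num [level]

theorem IsSparse.exists_prime_modEq_one {ι : Type*} {I : Finset ι} {d : ι → ℕ}
    [∀ i, Fact (d i).Prime] (h : IsSparse I d (level m)) (hI : 10 ^ 17 ≤ #I)
    (hx : level (m + 7) ^ 89 ≤ x) (hx' : x < level (m + 7) ^ 178) :
    ∃ i ∈ I, ∃ p ∈ Ioc x (4 * x), p ≡ 1 [MOD d i] ∧ p.Prime := by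
  by_contra! hno
  have hz := two_pow_le_level_add_seven m
  have hzx : level (m + 7) ≤ x := (Nat.le_self_pow (by norm_num) _).trans hx
  have hx0 : (2 ^ 128 : ℝ) ≤ x := mod_cast hz.trans hzx
  have hL := log_eight_mul_le_mul_log_level (by omega) hx'
  have hρ : ∑ n ∈ Ioc x (4 * x), roughIndicator (level (m + 7)) n ≤ _ :=
    (hasSieve_primesBelow_level subset_rfl).sum_siftIndicator_le (show x ≤ 4 * x by omega)
  have hclass := class_error_le (w := level m) (z := level (m + 7)) (X := x) rfl (mod_cast hz)
    (Nat.cast_nonneg _) (mod_cast two_pow_mul_level_le m)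
    (le_self_pow₀ (mod_cast one_le_two.trans (two_le_level _)) (by norm_num : 86 ≠ 0))
    (by rw [← pow_add]; exact_mod_cast hx) (Real.log_le_log (by linarith) (by linarith)) hL
    (siftDensity_pos fun p hp => Nat.prime_of_mem_primesBelow hp).le
    (siftDensity_primesBelow_le (two_le_level _)) (hρ.trans_eq (by push_cast; ring))
  have hboxes := floor_logb_add_one_mul_le (M := 8 * x) (X := x) rfl (half_le_log_level m)
    (by linarith) (by linarith [log_level_add_seven m]) (by linarith)
  have hupper := h.card_mul_sum_roughVonMangoldt_le (c := 1 + 1 / 10 ^ 4)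
    (fun S => hasSieve_primesBelow_level) hno (by positivity) (by omega) (by norm_num)
    (by norm_num)
  rw [add_sub_cancel_left] at hupper
  have hlower := le_sum_roughVonMangoldt (by omega) hzx
  have hI' : (10 ^ 17 : ℝ) ≤ #I := mod_cast hI
  nlinarith

end Existence

section Dyadic

lemma exists_isSparse_primes {R w : ℕ} (J : ℕ) (hR : 1 ≤ R) (hw : 2 ^ J * R ≤ w) :
    ∃ d : ℕ → ℕ, (∀ i, (d i).Prime) ∧ IsSparse (range J) d w ∧
      ∀ i < J, R < d i ∧ d i ≤ 2 ^ J * R := by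
  choose d hprime hlt hle using fun i : ℕ =>
    Nat.exists_prime_lt_and_le_two_mul (2 ^ i * R) (by positivity)
  have hmono : StrictMono d := strictMono_nat_of_lt_succ fun i =>
    (hle i).trans_lt (by simpa only [pow_succ', mul_assoc] using hlt (i + 1))
  have hupper : ∀ i < J, d i ≤ 2 ^ J * R := fun i hi =>
    calc d i ≤ 2 ^ (i + 1) * R := by simpa only [pow_succ', mul_assoc] using hle i
      _ ≤ 2 ^ J * R := by gcongr <;> omega
  have hlower : ∀ i, 2 ^ i < d i := fun i => (Nat.le_mul_of_pos_right _ hR).trans_lt (hlt i)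
  refine ⟨d, hprime, ⟨hmono.injective.injOn, fun i hi => (hupper i (mem_range.1 hi)).trans hw, ?_⟩,
    fun i hi => ⟨(Nat.le_mul_of_pos_left _ (by positivity)).trans_lt (hlt i), hupper i hi⟩⟩
  calc ∑ i ∈ range J, 1 / ((d i : ℝ) - 1) ≤ ∑ i ∈ range J, (1 / 2 : ℝ) ^ i := by
        gcongr with i
        rw [one_div_pow]
        gcongr
        rw [le_sub_iff_add_le]
        exact_mod_cast hlower i
    _ ≤ 2 := sum_geometric_two_le J

lemma exists_level_pow_le_lt {x : ℕ} (hx : level 7 ^ 89 ≤ x) :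
    ∃ m, level (m + 7) ^ 89 ≤ x ∧ x < level (m + 7) ^ 178 := by
  have hex : ∃ m, x < level (m + 8) ^ 89 := by
    refine ⟨x, ?_⟩
    calc x < x + 8 := by omega
      _ ≤ level (x + 8) := level_strictMono.le_apply
      _ ≤ level (x + 8) ^ 89 := Nat.le_self_pow (by norm_num) _
  refine ⟨Nat.find hex, ?_, ?_⟩
  · cases h : Nat.find hex with
    | zero => exact hx
    | succ m => exact not_lt.1 (Nat.find_min hex (h ▸ m.lt_succ_self))
  · have := Nat.find_spec hex
    rwa [level_add _ 8, show 2 ^ 8 = 2 ^ 7 * 2 by norm_num, pow_mul _ (2 ^ 7), ← level_add,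
      ← pow_mul] at this

theorem exists_prime_dvd_prime_sub_one : ∃ J M x₀ : ℕ, 1 ≤ M ∧ ∀ x R : ℕ, x₀ ≤ x → 1 ≤ R →
    (2 ^ J * R) ^ M ≤ x → ∃ d p : ℕ, p.Prime ∧ R < d ∧ d ≤ 2 ^ J * R ∧
      x < p ∧ p ≤ 4 * x ∧ d ∣ p - 1 := by
  obtain ⟨J, hJ⟩ : ∃ J, 10 ^ 17 ≤ J := ⟨_, le_rfl⟩
  refine ⟨J, 22784, level 7 ^ 89, by norm_num, fun x R hx hR hxR => ?_⟩
  obtain ⟨m, hmx, hxm⟩ := exists_level_pow_le_lt hx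
  have hw : 2 ^ J * R ≤ level m := by
    rw [level_add, ← pow_mul] at hxm
    exact (lt_of_pow_lt_pow_left' _ (hxR.trans_lt hxm)).le
  obtain ⟨d, hprime, hd, hdR⟩ := exists_isSparse_primes J hR hw
  have (i : ℕ) : Fact (d i).Prime := ⟨hprime i⟩
  obtain ⟨i, hi, p, hp, hpd, hpp⟩ := hd.exists_prime_modEq_one (by rwa [card_range]) hmx hxm
  obtain ⟨hRd, hdle⟩ := hdR i (mem_range.1 hi)
  exact ⟨d i, p, hpp, hRd, hdle, (mem_Ioc.1 hp).1, (mem_Ioc.1 hp).2,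
    (Nat.modEq_iff_dvd' hpp.one_le).1 hpd.symm⟩

end Dyadic

/-- The positive numbers `a` and `b` agree up to the factor `K`. -/
structure WithinFactor (K a b : ℝ) : Prop where
  pos_left : 0 < a
  pos_right : 0 < b
  le_mul : a ≤ K * b
  le_mul' : b ≤ K * a

section WithinFactor
variable {K K' a a' b b' : ℝ}

lemma WithinFactor.refl (ha : 0 < a) : WithinFactor 1 a a :=
  ⟨ha, ha, (one_mul a).ge, (one_mul a).ge⟩

lemma WithinFactor.symm (h : WithinFactor K a b) : WithinFactor K b a :=
  ⟨h.pos_right, h.pos_left, h.le_mul', h.le_mul⟩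

lemma WithinFactor.const_pos (h : WithinFactor K a b) : 0 < K :=
  pos_of_mul_pos_left (h.pos_left.trans_le h.le_mul) h.pos_right.le

lemma WithinFactor.of_le_of_le (ha : 0 < a) (hK : 1 ≤ K) (hab : a ≤ b) (hba : b ≤ K * a) :
    WithinFactor K a b :=
  ⟨ha, ha.trans_le hab, hab.trans (le_mul_of_one_le_left (ha.le.trans hab) hK), hba⟩

lemma WithinFactor.mono (h : WithinFactor K a b) (hK : K ≤ K') : WithinFactor K' a b :=
  ⟨h.pos_left, h.pos_right, h.le_mul.trans (mul_le_mul_of_nonneg_right hK h.pos_right.le),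
    h.le_mul'.trans (mul_le_mul_of_nonneg_right hK h.pos_left.le)⟩

lemma WithinFactor.mul (h : WithinFactor K a b) (h' : WithinFactor K' a' b') :
    WithinFactor (K * K') (a * a') (b * b') where
  pos_left := mul_pos h.pos_left h'.pos_left
  pos_right := mul_pos h.pos_right h'.pos_right
  le_mul := (mul_le_mul h.le_mul h'.le_mul h'.pos_left.le
    (mul_pos h.const_pos h.pos_right).le).trans_eq (mul_mul_mul_comm ..)
  le_mul' := (mul_le_mul h.le_mul' h'.le_mul' h'.pos_right.le
    (mul_pos h.const_pos h.pos_left).le).trans_eq (mul_mul_mul_comm ..)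

lemma WithinFactor.inv (h : WithinFactor K a b) : WithinFactor K a⁻¹ b⁻¹ where
  pos_left := inv_pos.2 h.pos_left
  pos_right := inv_pos.2 h.pos_right
  le_mul := by
    rw [← div_eq_mul_inv, inv_le_comm₀ h.pos_left (div_pos h.const_pos h.pos_right), inv_div,
      div_le_iff₀ h.const_pos, mul_comm]
    exact h.le_mul'
  le_mul' := by
    rw [← div_eq_mul_inv, inv_le_comm₀ h.pos_right (div_pos h.const_pos h.pos_left), inv_div,
      div_le_iff₀ h.const_pos, mul_comm]
    exact h.le_mul

lemma WithinFactor.pow (h : WithinFactor K a b) (n : ℕ) : WithinFactor (K ^ n) (a ^ n) (b ^ n) where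
  pos_left := pow_pos h.pos_left n
  pos_right := pow_pos h.pos_right n
  le_mul := (pow_le_pow_left₀ h.pos_left.le h.le_mul n).trans_eq (mul_pow ..)
  le_mul' := (pow_le_pow_left₀ h.pos_right.le h.le_mul' n).trans_eq (mul_pow ..)

lemma WithinFactor.trans {c : ℝ} (h : WithinFactor K a b) (h' : WithinFactor K' b c) :
    WithinFactor (K * K') a c where
  pos_left := h.pos_left
  pos_right := h'.pos_right
  le_mul := h.le_mul.trans
    ((mul_le_mul_of_nonneg_left h'.le_mul h.const_pos.le).trans_eq (mul_assoc ..).symm)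
  le_mul' := h'.le_mul'.trans
    ((mul_le_mul_of_nonneg_left h.le_mul' h'.const_pos.le).trans_eq (by ring))

end WithinFactor

/-- Every power `P ^ j` with `j < D` is within the factor `K` of a divisor of `n`. -/
def HasDivisorsNear (P K : ℝ) (D n : ℕ) : Prop :=
  ∀ j < D, ∃ N : ℕ, N ∣ n ∧ WithinFactor K N (P ^ j)

section HasDivisorsNear

variable {P K : ℝ} {D n : ℕ}

lemma hasDivisorsNear_one (P : ℝ) : HasDivisorsNear P 1 1 1 := fun j hj =>
  ⟨1, dvd_rfl, by simpa [Nat.lt_one_iff.1 hj] using WithinFactor.refl one_pos⟩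

lemma HasDivisorsNear.mono {K' : ℝ} (h : HasDivisorsNear P K D n) (hK : K ≤ K') :
    HasDivisorsNear P K' D n := fun j hj =>
  let ⟨N, hN, hNj⟩ := h j hj
  ⟨N, hN, hNj.mono hK⟩

lemma HasDivisorsNear.mul {e g : ℕ} (h : HasDivisorsNear P K D n) (he : e ≤ D)
    (hg : WithinFactor 2 g (P ^ e)) : HasDivisorsNear P (2 * K) (D + e) (n * g) := by
  intro j hj
  obtain hjD | hDj := lt_or_ge j D
  · obtain ⟨N, hN, hNj⟩ := h j hjD
    exact ⟨N, hN.mul_right g, hNj.mono (by linarith [hNj.const_pos])⟩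
  · obtain ⟨N, hN, hNj⟩ := h (j - e) (by omega)
    refine ⟨N * g, mul_dvd_mul_right hN g, ?_⟩
    rw [← Nat.sub_add_cancel (he.trans hDj), pow_add, Nat.cast_mul, mul_comm 2]
    exact hNj.mul hg

lemma HasDivisorsNear.mul_prod {c : ℕ} {g : ℕ → ℕ} (h : HasDivisorsNear P K (D + c) n)
    (hg : ∀ i, WithinFactor 2 (g i) (P ^ (c * 2 ^ i))) (a : ℕ) :
    HasDivisorsNear P (2 ^ a * K) (D + c * 2 ^ a) (n * ∏ i ∈ range a, g i) := by
  induction a with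
  | zero => simpa using h
  | succ a ih =>
    rw [prod_range_succ, ← mul_assoc, pow_succ' (2 : ℝ), mul_assoc,
      show D + c * 2 ^ (a + 1) = D + c * 2 ^ a + c * 2 ^ a by ring]
    exact ih.mul (Nat.le_add_left ..) (hg a)

end HasDivisorsNear

section CyclotomicFactors

lemma sub_one_mul_prod_pow_two_pow_add_one {R : Type*} [CommRing R] (x : R) (a : ℕ) :
    (x - 1) * ∏ i ∈ range a, (x ^ 2 ^ i + 1) = x ^ 2 ^ a - 1 := by
  induction a with
  | zero => simp
  | succ a ih => rw [prod_range_succ, ← mul_assoc, ih]; ring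

variable {p : ℕ}

lemma withinFactor_geom_sum (hp : 2 ≤ p) (s : ℕ) :
    WithinFactor 2 (∑ i ∈ range (s + 1), p ^ i : ℕ) ((p : ℝ) ^ s) := by
  have hlt : ∑ i ∈ range s, p ^ i < p ^ s := Nat.geomSum_lt hp fun i hi => mem_range.1 hi
  have hle : ((∑ i ∈ range s, p ^ i : ℕ) : ℝ) ≤ (p : ℝ) ^ s := by exact_mod_cast hlt.le
  rw [sum_range_succ, Nat.cast_add, Nat.cast_pow]
  exact (WithinFactor.of_le_of_le (by positivity) one_le_two
    (le_add_of_nonneg_left (Nat.cast_nonneg _)) (by linarith)).symm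

lemma withinFactor_pow_add_one {x : ℝ} (hx : 1 ≤ x) (n : ℕ) :
    WithinFactor 2 (x ^ n + 1) (x ^ n) := by
  have h : 1 ≤ x ^ n := one_le_pow₀ hx
  exact (WithinFactor.of_le_of_le (by positivity) one_le_two (by linarith) (by linarith)).symm

lemma withinFactor_of_mul_add_one_eq {y z g : ℝ} (hy : 1 ≤ y) (hz : 1 ≤ z)
    (hg : z * y + 1 = (y + 1) * g) : WithinFactor 2 g z := by
  have hg0 : 0 < g := (pos_iff_pos_of_mul_pos (hg ▸ by positivity)).1 (by positivity : 0 < y + 1)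
  refine .of_le_of_le hg0 one_le_two ?_ ?_
  · exact le_of_mul_le_mul_left (hg.symm.le.trans (by linarith)) (by linarith : 0 < y + 1)
  · refine le_of_mul_le_mul_left ?_ (by linarith : 0 < y + 1)
    linarith [le_mul_of_one_le_right (zero_le_one.trans hz) hy]

lemma exists_pow_add_one_eq_mul (hp : 1 ≤ p) {s : ℕ} (hs : Odd (s + 1)) (i : ℕ) :
    ∃ g : ℕ, (p ^ (s + 1)) ^ 2 ^ i + 1 = (p ^ 2 ^ i + 1) * g ∧
      WithinFactor 2 g ((p : ℝ) ^ (s * 2 ^ i)) := by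
  have hp' : (1 : ℝ) ≤ p := by exact_mod_cast hp
  obtain ⟨g, hg⟩ := hs.nat_add_dvd_pow_add_pow (p ^ 2 ^ i) 1
  rw [one_pow, pow_right_comm] at hg
  refine ⟨g, hg, withinFactor_of_mul_add_one_eq (one_le_pow₀ hp' : 1 ≤ (p : ℝ) ^ 2 ^ i)
    (one_le_pow₀ hp') ?_⟩
  rw [pow_mul, ← mul_pow, ← pow_succ]
  exact_mod_cast hg

lemma exists_hasDivisorsNear_of_odd {a s : ℕ} (hp : 2 ≤ p) (hs : Odd (s + 1)) (hsa : s ≤ 2 ^ a) :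
    ∃ n, (p - 1) * n = p ^ (2 ^ a * (s + 1)) - 1 ∧
      HasDivisorsNear p (2 ^ (2 * a + 1)) (2 ^ a * (s + 1)) n := by
  have hp1 : 1 ≤ p := one_le_two.trans hp
  choose g hg hg' using exists_pow_add_one_eq_mul hp1 hs
  have h₁ := (hasDivisorsNear_one (p : ℝ)).mul_prod (D := 0) (c := 1)
    (g := fun i => p ^ 2 ^ i + 1) (fun i => by
      simpa using withinFactor_pow_add_one (Nat.one_le_cast.2 hp1) (2 ^ i)) a
  have h₂ := (h₁.mul (by simpa using hsa) (withinFactor_geom_sum hp s)).mul_prod hg' a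
  refine ⟨_, ?_, by convert h₂ using 1 <;> ring⟩
  zify [hp1, Nat.one_le_pow _ p hp1]
  calc ((p : ℤ) - 1) * (1 * (∏ i ∈ range a, ((p : ℤ) ^ 2 ^ i + 1)) *
          (∑ i ∈ range (s + 1), (p : ℤ) ^ i) * ∏ i ∈ range a, (g i : ℤ))
      = ((∑ i ∈ range (s + 1), (p : ℤ) ^ i) * (p - 1)) *
          ∏ i ∈ range a, (((p : ℤ) ^ 2 ^ i + 1) * g i) := by rw [prod_mul_distrib]; ring
    _ = ((p : ℤ) ^ (s + 1) - 1) * ∏ i ∈ range a, (((p : ℤ) ^ (s + 1)) ^ 2 ^ i + 1) := by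
      rw [geom_sum_mul]
      congr! 2 with i
      exact_mod_cast (hg i).symm
    _ = (p : ℤ) ^ (2 ^ a * (s + 1)) - 1 := by
      rw [sub_one_mul_prod_pow_two_pow_add_one, ← pow_mul, mul_comm (s + 1)]

lemma exists_hasDivisorsNear {T t : ℕ} (hp : 2 ≤ p) (ht : 1 ≤ t) (htT : t ≤ T) :
    ∃ n, (p - 1) * n = p ^ (2 ^ T * t) - 1 ∧
      HasDivisorsNear p (2 ^ (4 * T + 1)) (2 ^ T * t) n := by
  obtain ⟨b, u, hu, rfl⟩ := Nat.exists_eq_two_pow_mul_odd (n := t) (by omega)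
  obtain ⟨s, rfl⟩ := Nat.exists_eq_add_one.2 hu.pos
  have hbT : b ≤ T :=
    (b.lt_two_pow_self.le.trans (Nat.le_mul_of_pos_right _ s.succ_pos)).trans htT
  have hsT : s ≤ 2 ^ (T + b) :=
    calc s ≤ 2 ^ b * (s + 1) := s.le_succ.trans (Nat.le_mul_of_pos_left _ (by positivity))
      _ ≤ T + b := htT.trans (Nat.le_add_right ..)
      _ ≤ 2 ^ (T + b) := Nat.lt_two_pow_self.le
  obtain ⟨n, hn, h⟩ := exists_hasDivisorsNear_of_odd hp hu hsT
  rw [← mul_assoc, ← pow_add]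
  exact ⟨n, hn, h.mono (pow_le_pow_right₀ one_le_two (by omega))⟩

end CyclotomicFactors

section RootApproximation

lemma exists_lt_eq_add_or_sub_abs_sub_round {k : ℕ} {β : ℝ} (hk : 0 < k) (hβ : 0 ≤ β)
    (hβk : β ≤ k) :
    ∃ i < k, β = i + |β - round β| ∨ β = i + 1 - |β - round β| := by
  obtain rfl | hlt := hβk.eq_or_lt
  · exact ⟨k - 1, by omega, .inr (by simp [Nat.cast_sub (Nat.one_le_iff_ne_zero.2 hk.ne')])⟩
  · refine ⟨⌊β⌋₊, (Nat.floor_lt hβ).2 hlt, ?_⟩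
    have hfloor : (⌊β⌋₊ : ℝ) + Int.fract β = β := by
      rw [natCast_floor_eq_intCast_floor hβ, Int.floor_add_fract]
    rw [abs_sub_round_eq_min]
    obtain h | h := min_choice (Int.fract β) (1 - Int.fract β)
    · left; rw [h, hfloor]
    · right; rw [h]; linarith

lemma exists_root_approx {m c : ℕ} {r n : ℝ} (hm : 0 < m) (hc : 0 < c) (hr : 1 ≤ r)
    (hrn : r ≤ n) :
    ∃ t, 1 ≤ t ∧ t ≤ m ∧ ∃ x s : ℝ, x ^ (c * t) = n ∧ 1 ≤ s ∧ s ^ m ≤ x ∧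
      ∃ j < c * t, r = x ^ j * s ∨ r = x ^ (j + 1) / s := by
  have hlogr : 0 ≤ Real.log r := Real.log_nonneg hr
  have hlog : Real.log r ≤ Real.log n := Real.log_le_log (by linarith) hrn
  set α : ℝ := Real.log r / Real.log n
  have hα' : α * Real.log n = Real.log r :=
    div_mul_cancel_of_imp fun h => (h ▸ hlog).antisymm hlogr
  obtain ⟨t, ht, htm, hround⟩ := Real.exists_nat_abs_mul_sub_round_le (c * α) hm
  have hk : 0 < c * t := Nat.mul_pos hc ht
  have hβ : (t : ℝ) * (c * α) = (c * t : ℕ) * α := by push_cast; ring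
  rw [hβ] at hround
  set k := c * t
  set δ : ℝ := |k * α - round (k * α)|
  set y : ℝ := Real.log n / k
  have hy : 0 ≤ y := div_nonneg (hlogr.trans hlog) k.cast_nonneg
  have hky : k * y = Real.log n := mul_div_cancel₀ _ (by positivity)
  obtain ⟨j, hj, hjr⟩ := exists_lt_eq_add_or_sub_abs_sub_round hk
    (mul_nonneg k.cast_nonneg (div_nonneg hlogr (hlogr.trans hlog)) : 0 ≤ k * α)
    (mul_le_of_le_one_right k.cast_nonneg (div_le_one_of_le₀ hlog (hlogr.trans hlog)))
  have hrexp : r = Real.exp (k * α * y) := by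
    rw [mul_right_comm, hky, mul_comm, hα', Real.exp_log (by linarith)]
  refine ⟨t, ht, htm, Real.exp y, Real.exp (δ * y), ?_, Real.one_le_exp (by positivity), ?_, j, hj,
    hjr.imp (fun h => ?_) fun h => ?_⟩
  · rw [← Real.exp_nat_mul, hky, Real.exp_log (by linarith)]
  · rw [← Real.exp_nat_mul, Real.exp_le_exp, ← mul_assoc]
    refine mul_le_of_le_one_left hy ?_
    calc (m : ℝ) * δ ≤ m * (1 / (m + 1)) := by gcongr
      _ ≤ 1 := by rw [mul_one_div]; exact div_le_one_of_le₀ (by linarith) (by positivity)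
  · rw [hrexp, h, ← Real.exp_nat_mul, ← Real.exp_add, add_mul]
  · rw [hrexp, h, ← Real.exp_nat_mul, ← Real.exp_sub, sub_mul, Nat.cast_succ]

end RootApproximation

section Assembly

lemma exists_prime_withinFactor : ∃ (m : ℕ) (D Q : ℝ), 0 < m ∧ 1 ≤ Q ∧ ∀ x s : ℝ, Q ≤ x →
    1 ≤ s → s ^ m ≤ x → ∃ d p : ℕ, p.Prime ∧ d ∣ p - 1 ∧ WithinFactor 8 p x ∧
      WithinFactor D d s := by
  obtain ⟨J, M, x₀, hM, h⟩ := exists_prime_dvd_prime_sub_one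
  refine ⟨M * 2, 2 ^ (J + 1), x₀ + ((2 ^ (J + 1)) ^ M) ^ 2, by omega, ?_, fun x s hx hs hsx => ?_⟩
  · exact le_add_of_nonneg_of_le x₀.cast_nonneg
      (one_le_pow₀ (one_le_pow₀ (one_le_pow₀ one_le_two)))
  have hR : (⌈s⌉₊ : ℝ) ≤ 2 * s := Nat.ceil_le_two_mul (by linarith)
  have hx1 : 1 ≤ x := (one_le_pow₀ hs).trans hsx
  have hX : (⌈x⌉₊ : ℝ) ≤ 2 * x := Nat.ceil_le_two_mul (by linarith)
  have hdpow : (2 : ℝ) ^ J * ⌈s⌉₊ ≤ 2 ^ (J + 1) * s :=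
    calc (2 : ℝ) ^ J * ⌈s⌉₊ ≤ 2 ^ J * (2 * s) := by gcongr
      _ = 2 ^ (J + 1) * s := by ring
  have hpow : ((2 : ℝ) ^ J * ⌈s⌉₊) ^ M ≤ x := by
    rw [pow_mul] at hsx
    calc ((2 : ℝ) ^ J * ⌈s⌉₊) ^ M ≤ (2 ^ (J + 1) * s) ^ M := by gcongr
      _ = (2 ^ (J + 1)) ^ M * s ^ M := mul_pow ..
      _ ≤ x := by
        linarith [two_mul_le_add_sq (((2 : ℝ) ^ (J + 1)) ^ M) (s ^ M),
          x₀.cast_nonneg (α := ℝ)]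
  obtain ⟨d, p, hp, hsd, hds, hxp, hpx, hdp⟩ := h ⌈x⌉₊ ⌈s⌉₊
    (by exact_mod_cast ((le_add_of_nonneg_right (by positivity)).trans hx).trans (Nat.le_ceil x))
    (Nat.one_le_ceil_iff.2 (by linarith)) (by exact_mod_cast hpow.trans (Nat.le_ceil x))
  have hds' : (d : ℝ) ≤ 2 ^ J * ⌈s⌉₊ := by exact_mod_cast hds
  have hpx' : (p : ℝ) ≤ 4 * ⌈x⌉₊ := by exact_mod_cast hpx
  refine ⟨d, p, hp, hdp, .symm ?_, .symm ?_⟩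
  · exact .of_le_of_le (by linarith) (by norm_num)
      ((Nat.le_ceil x).trans (by exact_mod_cast hxp.le)) (by linarith)
  · exact .of_le_of_le (by linarith) (one_le_pow₀ one_le_two)
      ((Nat.le_ceil s).trans (by exact_mod_cast hsd.le)) (hds'.trans hdpow)

lemma HasDivisorsNear.exists_dvd_withinFactor {K L D x s r : ℝ} {p d k n j : ℕ}
    (hn : HasDivisorsNear p K k n) (hp : 2 ≤ p) (hL : 1 ≤ L) (hdp : d ∣ p - 1)
    (hpx : WithinFactor L p x) (hds : WithinFactor D d s) (hj : j < k)
    (hr : r = x ^ j * s ∨ r = x ^ (j + 1) / s) :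
    ∃ A : ℕ, A ∣ (p - 1) * n ∧ WithinFactor (2 * D * K * L ^ k) A r := by
  obtain ⟨N, hN, hNj⟩ := hn j hj
  have hNx := hNj.trans (hpx.pow j)
  have hK := hNj.const_pos
  have hD := hds.const_pos
  obtain rfl | rfl := hr
  · refine ⟨N * d, mul_comm d N ▸ mul_dvd_mul hdp hN, ?_⟩
    rw [Nat.cast_mul]
    refine (hNx.mul hds).mono ?_
    calc K * L ^ j * D ≤ K * L ^ k * D := by gcongr
      _ ≤ 2 * D * K * L ^ k := by linarith [show 0 < K * L ^ k * D by positivity]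
  · obtain ⟨e, he⟩ := hdp
    have hp1 : WithinFactor 2 ((p - 1 : ℕ) : ℝ) p := by
      have hp' : (2 : ℝ) ≤ p := by exact_mod_cast hp
      rw [Nat.cast_pred (by omega)]
      exact .of_le_of_le (by linarith) one_le_two (by linarith) (by linarith)
    have hes : (e : ℝ) = (p - 1 : ℕ) * (d : ℝ)⁻¹ := by
      rw [he, Nat.cast_mul, mul_comm, inv_mul_cancel_left₀ hds.pos_left.ne']
    refine ⟨N * e, mul_comm e N ▸ mul_dvd_mul ⟨d, he.trans (mul_comm ..)⟩ hN, ?_⟩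
    rw [Nat.cast_mul, hes, pow_succ, div_eq_mul_inv, mul_assoc (x ^ j)]
    refine (hNx.mul ((hp1.trans hpx).mul hds.inv)).mono ?_
    calc K * L ^ j * (2 * L * D) = 2 * D * K * L ^ (j + 1) := by ring
      _ ≤ 2 * D * K * L ^ k := by gcongr; exact hj

theorem exists_isPrimePow_withinFactor : ∃ K n₀ : ℕ, 0 < K ∧ ∀ r n : ℕ, 1 ≤ r → r ≤ n → n₀ ≤ n →
    ∃ q A : ℕ, IsPrimePow q ∧ A ∣ q - 1 ∧ WithinFactor K q n ∧ WithinFactor K A r := by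
  obtain ⟨m, D, Q, hm, hQ, hprime⟩ := exists_prime_withinFactor
  set k₀ := 2 ^ m * m
  set K₀ : ℝ := 2 * D * 2 ^ (4 * m + 1) * 8 ^ k₀
  refine ⟨⌈max (8 ^ k₀) K₀⌉₊, ⌈Q ^ k₀⌉₊,
    Nat.ceil_pos.2 (lt_max_of_lt_left (by positivity)), fun r n hr hrn hn => ?_⟩
  have hK := Nat.le_ceil (max (8 ^ k₀) K₀)
  obtain ⟨t, ht, htm, x, s, hxn, hs, hsx, j, hj, hrx⟩ := exists_root_approx (c := 2 ^ m) hm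
    (by positivity) (Nat.one_le_cast.2 hr : (1 : ℝ) ≤ r) (Nat.cast_le.2 hrn : (r : ℝ) ≤ n)
  have hk : 2 ^ m * t ≤ k₀ := Nat.mul_le_mul_left _ htm
  have hQx : Q ≤ x := by
    refine le_of_pow_le_pow_left₀ (n := 2 ^ m * t) (by positivity)
      (zero_le_one.trans ((one_le_pow₀ hs).trans hsx)) ?_
    calc Q ^ (2 ^ m * t) ≤ Q ^ k₀ := pow_le_pow_right₀ hQ hk
      _ ≤ x ^ (2 ^ m * t) := hxn ▸ Nat.ceil_le.1 hn
  obtain ⟨d, p, hp, hdp, hpx, hds⟩ := hprime x s hQx hs hsx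
  obtain ⟨N, hN, hnear⟩ := exists_hasDivisorsNear hp.two_le ht htm
  obtain ⟨A, hA, hAr⟩ := hnear.exists_dvd_withinFactor hp.two_le (by norm_num) hdp hpx hds hj hrx
  refine ⟨p ^ (2 ^ m * t), A, hp.isPrimePow.pow (by positivity), hN ▸ hA, ?_, ?_⟩
  · rw [← hxn, Nat.cast_pow]
    exact (hpx.pow _).mono
      ((pow_le_pow_right₀ (by norm_num) hk).trans ((le_max_left _ _).trans hK))
  · refine hAr.mono (le_trans ?_ ((le_max_right _ _).trans hK))
    have := hds.const_pos
    exact mul_le_mul_of_nonneg_left (pow_le_pow_right₀ (by norm_num) hk) (by positivity)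

lemma le_and_le_div_mul_of_withinFactor {K q A n r : ℕ} (hK : 0 < K) (hq : 2 ≤ q)
    (hA : A ∣ q - 1) (hqn : WithinFactor K q (2 * K ^ 3 * n : ℕ))
    (hAr : WithinFactor K A (K * r : ℕ)) : r ≤ A ∧ n ≤ (q - 1) / A * r := by
  have hA0 : 0 < A := Nat.cast_pos.1 hAr.pos_left
  have hn : 2 * K ^ 3 * n ≤ K * q := by exact_mod_cast hqn.le_mul'
  have hAK : A ≤ K * (K * r) := by exact_mod_cast hAr.le_mul
  refine ⟨Nat.le_of_mul_le_mul_left (by exact_mod_cast hAr.le_mul') hK, ?_⟩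
  obtain ⟨B, hB⟩ := hA
  rw [hB, Nat.mul_div_cancel_left _ hA0]
  refine Nat.le_of_mul_le_mul_left ?_ (show 0 < 2 * K ^ 3 by positivity)
  calc 2 * K ^ 3 * n ≤ K * q := hn
    _ ≤ K * (2 * (A * B)) := by gcongr; omega
    _ ≤ K * (2 * (K * (K * r) * B)) := by gcongr
    _ = 2 * K ^ 3 * (B * r) := by ring

end Assembly

/-- **Lemma 4.3.** There is an absolute constant `C > 0` such that for all positive
integers `r ≤ n` there is a prime power `q ≤ C·n` and a divisor `d` of `q - 1` with
`d ≥ r` and `(q-1)/d ≥ n/r` (so `𝔽_q^*` has a subgroup of size at least `r` with at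
least `n/r` cosets). -/
theorem exists_primepow_with_large_subgroup_and_index :
    ∃ C : ℝ, 0 < C ∧
      ∀ r n : ℕ, 0 < r → r ≤ n →
        ∃ q : ℕ, IsPrimePow q ∧ (q : ℝ) ≤ C * (n : ℝ) ∧
          ∃ d : ℕ, 0 < d ∧ d ∣ q - 1 ∧ r ≤ d ∧
            (n : ℝ) / (r : ℝ) ≤ (((q - 1) / d : ℕ) : ℝ) := by
  obtain ⟨K, n₀, hK, h⟩ := exists_isPrimePow_withinFactor
  refine ⟨K * (2 * K ^ 3 * (n₀ + 1)), by positivity, fun r n hr hrn => ?_⟩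
  have hKrn : K * r ≤ 2 * K ^ 3 * ((n₀ + 1) * n) :=
    calc K * r ≤ K * n := Nat.mul_le_mul_left K hrn
      _ ≤ K * n * (2 * K ^ 2 * (n₀ + 1)) := Nat.le_mul_of_pos_right _ (by positivity)
      _ = 2 * K ^ 3 * ((n₀ + 1) * n) := by ring
  have hn₀ : n₀ ≤ 2 * K ^ 3 * ((n₀ + 1) * n) :=
    calc n₀ ≤ (n₀ + 1) * n := n₀.le_succ.trans (Nat.le_mul_of_pos_right _ (hr.trans_le hrn))
      _ ≤ 2 * K ^ 3 * ((n₀ + 1) * n) := Nat.le_mul_of_pos_left _ (by positivity)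
  obtain ⟨q, A, hq, hA, hqn, hAr⟩ := h (K * r) _ (Nat.mul_pos hK hr) hKrn hn₀
  obtain ⟨hrA, hnA⟩ := le_and_le_div_mul_of_withinFactor hK hq.two_le hA hqn hAr
  refine ⟨q, hq, ?_, A, Nat.cast_pos.1 hAr.pos_left, hA, hrA, ?_⟩
  · exact hqn.le_mul.trans_eq (by push_cast; ring)
  · rw [div_le_iff₀ (Nat.cast_pos.2 hr)]
    exact_mod_cast (Nat.le_mul_of_pos_left n n₀.succ_pos).trans hnA
end

section
/- There exists an absolute constant C > 0 such that for all positive integers n, r, a with r ∣ n, a < r, and n − (n/r)·a − 2 > 0, there exists a prime power q ≤ C·n for which a maximally recoverable (n, r, h=2, a, q)-local reconstruction code exists. -/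
/-- The parity check matrix of an `(n, r, h, a, q)`-local reconstruction code with `g = n/r`
local groups, given by local-parity matrices `A i` (in block-diagonal position) and
heavy-parity matrices `B i`. Rows are indexed by `(Fin g × Fin a) ⊕ Fin h`
(local parity rows first, then the `h` heavy rows) and columns by `Fin g × Fin r`
(the `i`-th local group consists of the columns with first coordinate `i`). -/
def lrcParityCheck (F : Type) [Field F] (g r a h : ℕ)
    (A : Fin g → Matrix (Fin a) (Fin r) F)
    (B : Fin g → Matrix (Fin h) (Fin r) F) :
    Matrix ((Fin g × Fin a) ⊕ Fin h) (Fin g × Fin r) F :=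
  fun ρ c =>
    Sum.elim (fun p : Fin g × Fin a => if p.1 = c.1 then A p.1 p.2 c.2 else 0)
      (fun j : Fin h => B c.1 j c.2) ρ

/-- `A, B` define a maximally recoverable LRC:  every `a × a` minor of each `A i` is
nonzero (stated: any `a` columns of `A i` are linearly independent), and for every set `E`
of `a * g + h` columns containing at least `a` columns from each local group, the
corresponding columns of the parity check matrix are linearly independent (equivalently,
the square submatrix of the parity check matrix on the columns of `E` is invertible). -/
def IsMRLRC (F : Type) [Field F] (g r a h : ℕ)
    (A : Fin g → Matrix (Fin a) (Fin r) F)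
    (B : Fin g → Matrix (Fin h) (Fin r) F) : Prop :=
  (∀ i : Fin g, ∀ S : Finset (Fin r), S.card = a →
      LinearIndependent F (fun c : {x // x ∈ S} => fun j : Fin a => A i j c.1)) ∧
  (∀ E : Finset (Fin g × Fin r), E.card = a * g + h →
      (∀ i : Fin g, a ≤ (E.filter (fun x => x.1 = i)).card) →
      LinearIndependent F
        (fun c : {x // x ∈ E} => fun ρ => lrcParityCheck F g r a h A B ρ c.1))

/-- There is a maximally recoverable `(n = g * r, r, h, a, q)`-local reconstruction code
with `g` local groups each of size `r`, over the field with `q` elements. -/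
def ExistsMRLRC (g r h a q : ℕ) : Prop :=
  ∃ (F : Type) (_ : Field F) (_ : Fintype F),
    Fintype.card F = q ∧
      ∃ (A : Fin g → Matrix (Fin a) (Fin r) F) (B : Fin g → Matrix (Fin h) (Fin r) F),
        IsMRLRC F g r a h A B

/-!
Inside local group `i` the local parities say that the moments `Mᵢⱼ = ∑ₖ xₖ αₖʲ` vanish for `j < a`.
A group with `a` erasures is then recovered by Vandermonde. If a single group has `a + 2` erasures,
the heavy parities `∑ᵢ Mᵢ,ₐ` and `∑ᵢ (Mᵢ,ₐ₊₁ + cᵢ Mᵢ,ₐ)` give its two missing moments. Otherwise two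
groups have `a + 1` erasures each, and for these `Mᵢ,ₐ₊₁ = σᵢ Mᵢ,ₐ`, where `σᵢ` is the sum of the
erased evaluation points; the heavy parities then again form a Vandermonde system, now in the
unknowns `Mᵢ,ₐ` with nodes `σᵢ + cᵢ`. The nodes are distinct, whatever the erasures, as soon as all
evaluation points lie in an additive subgroup `H` and the `cᵢ` in distinct cosets of `H`. All groups
reuse the same `r` evaluation points, so a field with `|H| ≥ r` and at least `g` cosets suffices.
-/

open Finset Polynomial

section WeightedPowerSum

variable {κ R : Type*} [CommRing R] {S : Finset κ} {α x : κ → R} {a : ℕ}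

/-- The `j`-th moment of the weights `x` placed at the nodes `α`, restricted to the indices in `S`:
the value of a degree-`j` Vandermonde parity check on the vector `x` supported on `S`. -/
def weightedPowerSum (S : Finset κ) (α x : κ → R) (j : ℕ) : R :=
  ∑ k ∈ S, x k * α k ^ j

theorem sum_mul_eval_eq_sum_coeff_mul_weightedPowerSum (S : Finset κ) (α x : κ → R) (p : R[X]) :
    ∑ k ∈ S, x k * p.eval (α k) =
      ∑ j ∈ range (p.natDegree + 1), p.coeff j * weightedPowerSum S α x j := by
  simp only [eval_eq_sum_range, weightedPowerSum, mul_sum]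
  rw [sum_comm]
  exact sum_congr rfl fun j _ ↦ sum_congr rfl fun k _ ↦ by ring

theorem eq_zero_of_weightedPowerSum_eq_zero [IsDomain R] (hα : Set.InjOn α S)
    (h : ∀ j < #S, weightedPowerSum S α x j = 0) : ∀ k ∈ S, x k = 0 := by
  let e := S.equivFin.symm
  have hinj : Function.Injective fun m ↦ α (e m) := hα.injective.comp e.injective
  have hzero : (fun m ↦ x (e m)) = 0 := by
    refine Matrix.eq_zero_of_forall_pow_sum_mul_pow_eq_zero hinj fun j ↦ ?_
    rw [e.sum_comp fun k : S ↦ x k * α k ^ (j : ℕ), sum_coe_sort S fun k ↦ x k * α k ^ (j : ℕ)]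
    exact h j j.isLt
  intro k hk
  simpa [e] using congrFun hzero (S.equivFin ⟨k, hk⟩)

theorem weightedPowerSum_eq_zero_of_card_le [IsDomain R] (hα : Set.InjOn α S)
    (h : ∀ j < a, weightedPowerSum S α x j = 0) (hS : #S ≤ a) (j : ℕ) :
    weightedPowerSum S α x j = 0 :=
  sum_eq_zero fun k hk ↦ by
    rw [eq_zero_of_weightedPowerSum_eq_zero hα (fun j hj ↦ h j (hj.trans_le hS)) k hk, zero_mul]

theorem weightedPowerSum_succ_of_card_eq_succ (hS : #S = a + 1)
    (h : ∀ j < a, weightedPowerSum S α x j = 0) :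
    weightedPowerSum S α x (a + 1) = (∑ k ∈ S, α k) * weightedPowerSum S α x a := by
  nontriviality R
  let p := Lagrange.nodal S α
  have hdeg : p.natDegree = a + 1 := Lagrange.natDegree_nodal.trans hS
  have hlead : p.coeff (a + 1) = 1 := hdeg ▸ Lagrange.nodal_monic.coeff_natDegree
  have hnext : p.coeff a = -∑ k ∈ S, α k := by
    simpa only [hS, Nat.add_sub_cancel, ← Lagrange.nodal_eq] using
      prod_X_sub_C_coeff_card_pred S α (hS ▸ a.succ_pos)
  have hroots : ∑ k ∈ S, x k * p.eval (α k) = 0 :=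
    sum_eq_zero fun k hk ↦ by rw [Lagrange.eval_nodal_at_node hk, mul_zero]
  rw [sum_mul_eval_eq_sum_coeff_mul_weightedPowerSum, hdeg, sum_range_succ, sum_range_succ,
    sum_eq_zero fun j hj ↦ by rw [h j (mem_range.1 hj), mul_zero], hlead, hnext] at hroots
  linear_combination hroots

end WeightedPowerSum

section HeavyParities

variable {ι κ R : Type*} [Fintype ι]

theorem concentrated_or_spread_of_sum_le_mul_card_add_two {m : ι → ℕ} {a : ℕ}
    (hm : ∀ i, a ≤ m i) (hsum : ∑ i, m i ≤ a * Fintype.card ι + 2) :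
    (∃ i₀, m i₀ ≤ a + 2 ∧ ∀ i ≠ i₀, m i ≤ a) ∨
      (∀ i, m i ≤ a + 1) ∧ #{i | m i = a + 1} ≤ 2 := by
  classical
  obtain ⟨e, he⟩ : ∃ e : ι → ℕ, ∀ i, m i = a + e i :=
    ⟨fun i ↦ m i - a, fun i ↦ (Nat.add_sub_cancel' (hm i)).symm⟩
  have hesum : ∑ i, e i ≤ 2 := by
    simp only [he, sum_add_distrib, sum_const, card_univ, smul_eq_mul] at hsum
    linarith
  by_cases hbig : ∃ i₀, 2 ≤ e i₀
  · obtain ⟨i₀, hi₀⟩ := hbig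
    have hsplit := add_sum_erase univ e (mem_univ i₀)
    refine Or.inl ⟨i₀, by rw [he]; omega, fun i hi ↦ ?_⟩
    have hle := single_le_sum_of_canonicallyOrdered (f := e) (mem_erase.2 ⟨hi, mem_univ i⟩)
    rw [he]
    omega
  · push Not at hbig
    refine Or.inr ⟨fun i ↦ by have := hbig i; rw [he]; omega, ?_⟩
    calc #{i | m i = a + 1} = ∑ i, if m i = a + 1 then 1 else 0 := card_filter _ _
      _ ≤ ∑ i, e i := sum_le_sum fun i _ ↦ by have := he i; split_ifs <;> omega
      _ ≤ 2 := hesum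

variable [CommRing R] [IsDomain R] {T : ι → Finset κ} {α : κ → R} {x : ι → κ → R} {c : ι → R}
  {a : ℕ}

theorem weightedPowerSum_eq_zero_of_concentrated (hα : ∀ i, Set.InjOn α (T i))
    (hlocal : ∀ i, ∀ j < a, weightedPowerSum (T i) α (x i) j = 0)
    (hheavy₀ : ∑ i, weightedPowerSum (T i) α (x i) a = 0)
    (hheavy₁ : ∑ i, (weightedPowerSum (T i) α (x i) (a + 1) +
      c i * weightedPowerSum (T i) α (x i) a) = 0)
    {i₀ : ι} (hi₀ : #(T i₀) ≤ a + 2) (hT : ∀ i ≠ i₀, #(T i) ≤ a) :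
    ∀ i, ∀ j < #(T i), weightedPowerSum (T i) α (x i) j = 0 := by
  have hother : ∀ i ≠ i₀, ∀ j, weightedPowerSum (T i) α (x i) j = 0 := fun i hi ↦
    weightedPowerSum_eq_zero_of_card_le (hα i) (hlocal i) (hT i hi)
  have hMa : weightedPowerSum (T i₀) α (x i₀) a = 0 := by
    rwa [Fintype.sum_eq_single i₀ fun i hi ↦ hother i hi a] at hheavy₀
  have hMsucc : weightedPowerSum (T i₀) α (x i₀) (a + 1) = 0 := by
    rw [Fintype.sum_eq_single i₀ fun i hi ↦ by simp only [hother i hi, mul_zero, add_zero]]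
      at hheavy₁
    simpa only [hMa, mul_zero, add_zero] using hheavy₁
  intro i j hj
  obtain rfl | hi := eq_or_ne i i₀
  · obtain hlt | rfl | rfl : j < a ∨ j = a ∨ j = a + 1 := by omega
    exacts [hlocal i j hlt, hMa, hMsucc]
  · exact hother i hi j

theorem weightedPowerSum_eq_zero_of_spread (hα : ∀ i, Set.InjOn α (T i))
    (hnodes : Function.Injective fun i ↦ ∑ k ∈ T i, α k + c i)
    (hlocal : ∀ i, ∀ j < a, weightedPowerSum (T i) α (x i) j = 0)
    (hheavy₀ : ∑ i, weightedPowerSum (T i) α (x i) a = 0)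
    (hheavy₁ : ∑ i, (weightedPowerSum (T i) α (x i) (a + 1) +
      c i * weightedPowerSum (T i) α (x i) a) = 0)
    (hT : ∀ i, #(T i) ≤ a + 1) (htwo : #{i | #(T i) = a + 1} ≤ 2) :
    ∀ i, ∀ j < #(T i), weightedPowerSum (T i) α (x i) j = 0 := by
  let U : Finset ι := {i | #(T i) = a + 1}
  have hother : ∀ i ∉ U, ∀ j, weightedPowerSum (T i) α (x i) j = 0 := fun i hi ↦ by
    have hne : #(T i) ≠ a + 1 := by simpa only [U, mem_filter_univ] using hi
    exact weightedPowerSum_eq_zero_of_card_le (hα i) (hlocal i)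
      (Nat.le_of_lt_succ ((hT i).lt_of_ne hne))
  have hMa : ∀ i ∈ U, weightedPowerSum (T i) α (x i) a = 0 := by
    refine eq_zero_of_weightedPowerSum_eq_zero hnodes.injOn fun j hj ↦ ?_
    obtain rfl | rfl : j = 0 ∨ j = 1 := by have : #U ≤ 2 := htwo; omega
    · rw [← sum_subset (subset_univ U) fun i _ hi ↦ hother i hi a] at hheavy₀
      simpa only [weightedPowerSum, pow_zero, mul_one] using hheavy₀
    · rw [← sum_subset (subset_univ U) fun i _ hi ↦ by
        simp only [hother i hi, mul_zero, add_zero]] at hheavy₁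
      rw [← hheavy₁, weightedPowerSum]
      refine sum_congr rfl fun i hi ↦ ?_
      rw [weightedPowerSum_succ_of_card_eq_succ ((mem_filter_univ i).1 hi) (hlocal i)]
      ring
  intro i j hj
  by_cases hi : i ∈ U
  · obtain hlt | rfl : j < a ∨ j = a := by have := hT i; omega
    exacts [hlocal i j hlt, hMa i hi]
  · exact hother i hi j

theorem eq_zero_of_local_and_heavy_parities (hα : ∀ i, Set.InjOn α (T i))
    (hnodes : Function.Injective fun i ↦ ∑ k ∈ T i, α k + c i)
    (hT : ∀ i, a ≤ #(T i)) (hcard : ∑ i, #(T i) ≤ a * Fintype.card ι + 2)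
    (hlocal : ∀ i, ∀ j < a, weightedPowerSum (T i) α (x i) j = 0)
    (hheavy₀ : ∑ i, weightedPowerSum (T i) α (x i) a = 0)
    (hheavy₁ : ∑ i, (weightedPowerSum (T i) α (x i) (a + 1) +
      c i * weightedPowerSum (T i) α (x i) a) = 0) :
    ∀ i, ∀ k ∈ T i, x i k = 0 := by
  suffices hM : ∀ i, ∀ j < #(T i), weightedPowerSum (T i) α (x i) j = 0 from
    fun i ↦ eq_zero_of_weightedPowerSum_eq_zero (hα i) (hM i)
  obtain ⟨i₀, hi₀, hi⟩ | ⟨hle, htwo⟩ := concentrated_or_spread_of_sum_le_mul_card_add_two hT hcard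
  · exact weightedPowerSum_eq_zero_of_concentrated hα hlocal hheavy₀ hheavy₁ hi₀ hi
  · exact weightedPowerSum_eq_zero_of_spread hα hnodes hlocal hheavy₀ hheavy₁ hle htwo

end HeavyParities

section GroupSlice

variable {ι κ : Type*} [DecidableEq ι] [DecidableEq κ] [Fintype κ]

/-- The erasures of the pattern `E` that lie in the local group `i`, as positions within that
group. -/
def groupSlice (E : Finset (ι × κ)) (i : ι) : Finset κ :=
  {k | (i, k) ∈ E}

theorem mem_groupSlice {E : Finset (ι × κ)} {i : ι} {k : κ} :
    k ∈ groupSlice E i ↔ (i, k) ∈ E :=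
  mem_filter_univ k

theorem card_groupSlice (E : Finset (ι × κ)) (i : ι) :
    #(groupSlice E i) = #{e ∈ E | e.1 = i} := by
  have himage : (groupSlice E i).map ⟨Prod.mk i, Prod.mk_right_injective i⟩ =
      ({e ∈ E | e.1 = i} : Finset (ι × κ)) := by
    ext ⟨i', k⟩
    simp only [mem_map, mem_groupSlice, Function.Embedding.coeFn_mk, Prod.mk.injEq, mem_filter]
    grind
  rw [← himage, card_map]

theorem sum_groupSlice [Fintype ι] {M : Type*} [AddCommMonoid M] (E : Finset (ι × κ))
    (f : ι × κ → M) : ∑ i, ∑ k ∈ groupSlice E i, f (i, k) = ∑ e ∈ E, f e :=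
  (sum_finset_product E univ (groupSlice E) fun _ ↦ by simp [mem_groupSlice]).symm

end GroupSlice

theorem sum_smul_lrcParityCheck_eq_zero_iff {F : Type} [Field F] {g r a h : ℕ}
    {A : Fin g → Matrix (Fin a) (Fin r) F} {B : Fin g → Matrix (Fin h) (Fin r) F}
    {E : Finset (Fin g × Fin r)} {x : Fin g × Fin r → F} :
    (∑ e ∈ E, x e • fun ρ ↦ lrcParityCheck F g r a h A B ρ e) = 0 ↔
      (∀ i j, ∑ k ∈ groupSlice E i, x (i, k) * A i j k = 0) ∧
        ∀ j, ∑ i, ∑ k ∈ groupSlice E i, x (i, k) * B i j k = 0 := by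
  simp only [funext_iff, Finset.sum_apply, Pi.smul_apply, Pi.zero_apply, smul_eq_mul, Sum.forall,
    Prod.forall, lrcParityCheck, Sum.elim_inl, Sum.elim_inr, ← sum_groupSlice E]
  refine and_congr_left' (forall₂_congr fun i j ↦ ?_)
  rw [Fintype.sum_eq_single i fun i' hi' ↦ sum_eq_zero fun k _ ↦ by rw [if_neg hi'.symm, mul_zero]]
  simp only [if_true]

section Construction

variable {F : Type} [Field F] {g r : ℕ}

/-- The local parity matrix shared by all local groups: the Vandermonde matrix with rows
`1, α, …, α ^ (a - 1)`. -/
def vandermondeLocalParity (α : Fin r → F) (a : ℕ) : Matrix (Fin a) (Fin r) F :=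
  .of fun j k ↦ α k ^ (j : ℕ)

/-- The heavy parity matrix of a local group: it continues the Vandermonde rows by `α ^ a` and
`α ^ (a + 1)`, the latter sheared by the shift `c`, which is what tells the groups apart. -/
def shiftedHeavyParity (α : Fin r → F) (a : ℕ) (c : F) : Matrix (Fin 2) (Fin r) F :=
  .of ![fun k ↦ α k ^ a, fun k ↦ α k ^ (a + 1) + c * α k ^ a]

theorem linearIndepOn_vandermondeLocalParity {α : Fin r → F} {a : ℕ} {S : Finset (Fin r)}
    (hα : Set.InjOn α S) (hS : #S ≤ a) :
    LinearIndepOn F (fun k j ↦ vandermondeLocalParity α a j k) (S : Set (Fin r)) := by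
  refine linearIndepOn_finset_iff.2 fun x hx ↦
    eq_zero_of_weightedPowerSum_eq_zero hα fun j hj ↦ ?_
  simpa [vandermondeLocalParity, weightedPowerSum] using congrFun hx ⟨j, hj.trans_le hS⟩

theorem isMRLRC_of_addSubgroup (a : ℕ) {H : AddSubgroup F} {α : Fin r → F} {c : Fin g → F}
    (hα : Function.Injective α) (hαH : ∀ k, α k ∈ H)
    (hc : Function.Injective fun i ↦ (c i : F ⧸ H)) :
    IsMRLRC F g r a 2 (fun _ ↦ vandermondeLocalParity α a)
      (fun i ↦ shiftedHeavyParity α a (c i)) := by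
  refine ⟨fun _ S hS ↦ linearIndepOn_vandermondeLocalParity hα.injOn hS.le, fun E hE hEa ↦
    (linearIndepOn_finset_iff (v := fun e ρ ↦ lrcParityCheck F g r a 2 _ _ ρ e)).2 fun x hx ↦ ?_⟩
  obtain ⟨hlocal, hheavy⟩ := sum_smul_lrcParityCheck_eq_zero_iff.1 hx
  have hnodes : Function.Injective fun i ↦ ∑ k ∈ groupSlice E i, α k + c i := fun i i' hii' ↦ by
    have hmem (i) : ((∑ k ∈ groupSlice E i, α k : F) : F ⧸ H) = 0 :=
      (QuotientAddGroup.eq_zero_iff _).2 (sum_mem fun k _ ↦ hαH k)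
    have hcoset := congrArg (QuotientAddGroup.mk' H) hii'
    simp only [map_add, QuotientAddGroup.mk'_apply, hmem, zero_add] at hcoset
    exact hc hcoset
  have hcard : ∑ i, #(groupSlice E i) ≤ a * Fintype.card (Fin g) + 2 := by
    simp only [card_eq_sum_ones, sum_groupSlice E fun _ ↦ 1]
    rw [← card_eq_sum_ones, hE, Fintype.card_fin]
  rintro ⟨i, k⟩ hk
  refine eq_zero_of_local_and_heavy_parities (x := fun i k ↦ x (i, k)) (fun _ ↦ hα.injOn) hnodes
    (fun i ↦ (hEa i).trans_eq (card_groupSlice E i).symm) hcard (fun i j hj ↦ hlocal i ⟨j, hj⟩)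
    (hheavy 0) ?_ i k (mem_groupSlice.2 hk)
  rw [← hheavy 1]
  refine sum_congr rfl fun i _ ↦ ?_
  rw [weightedPowerSum, weightedPowerSum, mul_sum, ← sum_add_distrib]
  refine sum_congr rfl fun k _ ↦ ?_
  simp only [shiftedHeavyParity, Matrix.of_apply, Matrix.cons_val_one, Matrix.cons_val_fin_one]
  ring

theorem existsMRLRC_two_of_le_card_of_le_index [Finite F] (a : ℕ) (H : AddSubgroup F)
    (hr : r ≤ Nat.card H) (hg : g ≤ H.index) : ExistsMRLRC g r 2 a (Nat.card F) := by
  have : Fintype F := Fintype.ofFinite F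
  let α : Fin r ↪ H := (Fin.castLEEmb hr).trans (Finite.equivFin H).symm.toEmbedding
  let c : Fin g ↪ F ⧸ H := (Fin.castLEEmb hg).trans (Finite.equivFin (F ⧸ H)).symm.toEmbedding
  refine ⟨F, inferInstance, this, Nat.card_eq_fintype_card.symm, _, _,
    isMRLRC_of_addSubgroup a (α := fun k ↦ (α k : F)) (c := fun i ↦ (c i).out)
      (Subtype.val_injective.comp α.injective) (fun k ↦ (α k).2) ?_⟩
  simpa only [QuotientAddGroup.out_eq'] using c.injective

end Construction

theorem exists_addSubgroup_card_eq_prime_pow {G : Type*} [AddGroup G] [Finite G] (p : ℕ) {s : ℕ}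
    [Fact p.Prime] (hdvd : p ^ s ∣ Nat.card G) : ∃ H : AddSubgroup G, Nat.card H = p ^ s := by
  obtain ⟨K, hK⟩ := Sylow.exists_subgroup_card_pow_prime (G := Multiplicative G) p hdvd
  exact ⟨K.toAddSubgroup', hK⟩

theorem existsMRLRC_two_prime_pow {p : ℕ} [Fact p.Prime] {g r s t : ℕ} (a : ℕ) (hr : r ≤ p ^ s)
    (hg : g ≤ p ^ t) (hst : s + t ≠ 0) : ExistsMRLRC g r 2 a (p ^ (s + t)) := by
  have hF : Nat.card (GaloisField p (s + t)) = p ^ (s + t) := GaloisField.card p _ hst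
  obtain ⟨H, hH⟩ := exists_addSubgroup_card_eq_prime_pow (G := GaloisField p (s + t)) p (s := s)
    (hF ▸ pow_dvd_pow p (s.le_add_right t))
  have hindex : H.index = p ^ t := by
    have hmul := H.card_mul_index
    rw [hH, hF, pow_add] at hmul
    exact Nat.eq_of_mul_eq_mul_left (pow_pos (Fact.out : p.Prime).pos s) hmul
  exact hF ▸ existsMRLRC_two_of_le_card_of_le_index a H (hr.trans_eq hH.symm)
    (hg.trans_eq hindex.symm)

theorem exists_mrlrc_h2_linear_field_size_general {p : ℕ} [Fact p.Prime] {n r : ℕ} (a : ℕ)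
    (hn : n ≠ 0) (hrn : r ∣ n) :
    ∃ m ≠ 0, p ^ m ≤ p ^ 2 * n ∧ ExistsMRLRC (n / r) r 2 a (p ^ m) := by
  have hp : 1 < p := (Fact.out : p.Prime).one_lt
  have hr : r ≠ 0 := ne_zero_of_dvd_ne_zero hn hrn
  have hg : n / r ≠ 0 := (Nat.div_ne_zero_iff_of_dvd hrn).2 ⟨hn, hr⟩
  refine ⟨(Nat.log p r + 1) + (Nat.log p (n / r) + 1), by omega, ?_,
    existsMRLRC_two_prime_pow a (Nat.lt_pow_succ_log_self hp r).le
      (Nat.lt_pow_succ_log_self hp (n / r)).le (by omega)⟩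
  calc p ^ ((Nat.log p r + 1) + (Nat.log p (n / r) + 1))
      = p ^ 2 * (p ^ Nat.log p r * p ^ Nat.log p (n / r)) := by ring
    _ ≤ p ^ 2 * (r * (n / r)) := by
      gcongr
      exacts [Nat.pow_log_le_self p hr, Nat.pow_log_le_self p hg]
    _ = p ^ 2 * n := by rw [Nat.mul_div_cancel' hrn]

/-- **Theorem 4.4.** There is an absolute constant `C > 0` such that for all positive
integers `n, r, a` with `r ∣ n`, `a < r` and `n - (n/r)·a - 2 > 0`, there is a prime power
`q ≤ C·n` for which a maximally recoverable `(n, r, h = 2, a, q)`-local reconstruction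
code exists. -/
theorem exists_mrlrc_h2_linear_field_size :
    ∃ C : ℝ, 0 < C ∧
      ∀ n r a : ℕ, 0 < r → r ∣ n → a < r → (n / r) * a + 2 < n →
        ∃ q : ℕ, IsPrimePow q ∧ (q : ℝ) ≤ C * (n : ℝ) ∧ ExistsMRLRC (n / r) r 2 a q := by
  refine ⟨4, by norm_num, fun n r a _ hrn _ hn ↦ ?_⟩
  obtain ⟨m, hm, hle, hcode⟩ := exists_mrlrc_h2_linear_field_size_general (p := 2) a (by omega) hrn
  exact ⟨2 ^ m, Nat.prime_two.isPrimePow.pow hm, by exact_mod_cast hle, hcode⟩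
end
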